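/- Let K be an algebraically closed field with char K ≠ 2, let H be a pointed Hopf algebra of discrete corepresentation type over K whose link-indecomposable component containing 1 has Ext-quiver Q^{m,n}, with distinct grouplikes a, b admitting nontrivial skew primitives in P(1,a) and P(1,b). Then one can choose nontrivial skew primitives x ∈ P(1,a), y ∈ P(1,b) and a scalar λ ∈ K× such that: ax + xa = 0, by + yb = 0, bx + λ⁻¹xb = 0, ay + λya = 0, x² ∈ P(1,a²), y² ∈ P(1,b²), and xy + λyx ∈ P(1,ab). -/

import Mathlib

open TensorProduct



section Basic

variable (K : Type) [CommRing K] (H : Type) [AddCommGroup H] [Module K H] [Coalgebra K H]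

/-- A grouplike element of a coalgebra. -/
def IsGrouplike (g : H) : Prop :=
  Coalgebra.counit (R := K) g = 1 ∧ Coalgebra.comul (R := K) g = g ⊗ₜ[K] g

/-- The space `P(g,h)` of `(g,h)`-skew primitive elements. -/
noncomputable def skewPrim (g h : H) : Submodule K H :=
  LinearMap.ker (Coalgebra.comul (R := K) (A := H)
    - (TensorProduct.mk K H H g + (TensorProduct.mk K H H).flip h))

lemma mem_skewPrim {g h x : H} :
    x ∈ skewPrim K H g h ↔ Coalgebra.comul (R := K) x = g ⊗ₜ[K] x + x ⊗ₜ[K] h := by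
  rw [skewPrim, LinearMap.mem_ker, LinearMap.sub_apply, sub_eq_zero, LinearMap.add_apply]
  rfl

/-- A submodule which is a subcoalgebra. -/
def IsSubcoalgebra (D : Submodule K H) : Prop :=
  ∀ x ∈ D, Coalgebra.comul (R := K) x ∈ LinearMap.range (TensorProduct.map D.subtype D.subtype)

/-- A coalgebra is pointed if every simple subcoalgebra is one-dimensional. -/
def IsPointedCoalgebra : Prop :=
  ∀ D : Submodule K H, IsSubcoalgebra K H D → D ≠ ⊥ →
    (∀ D' : Submodule K H, IsSubcoalgebra K H D' → D' ≤ D → D' = ⊥ ∨ D' = D) →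
    Module.finrank K ↥D = 1

end Basic

section Comodules

variable (K : Type) [CommRing K] (H : Type) [AddCommGroup H] [Module K H] [Coalgebra K H]

/-- A (finite or infinite dimensional) right `H`-comodule. -/
structure Comod where
  carrier : Type
  [acg : AddCommGroup carrier]
  [mod : Module K carrier]
  ρ : carrier →ₗ[K] carrier ⊗[K] H
  counit_comp : ∀ m : carrier,
    (TensorProduct.rid K carrier)
      ((LinearMap.lTensor carrier (Coalgebra.counit (R := K) (A := H))) (ρ m)) = m
  coassoc : ∀ m : carrier,
    (LinearMap.lTensor carrier (Coalgebra.comul (R := K) (A := H))) (ρ m)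
      = (TensorProduct.assoc K carrier H H) ((LinearMap.rTensor H ρ) (ρ m))

attribute [instance] Comod.acg Comod.mod

/-- A morphism of right `H`-comodules. -/
structure ComodHom (M N : Comod K H) where
  toLin : M.carrier →ₗ[K] N.carrier
  compat : ∀ m : M.carrier, N.ρ (toLin m) = (LinearMap.rTensor H toLin) (M.ρ m)

/-- Isomorphism of comodules. -/
def ComodIso (M N : Comod K H) : Prop :=
  ∃ f : ComodHom K H M N, Function.Bijective f.toLin

/-- An indecomposable comodule: it is nonzero, and (equivalently to the usual definition,
since idempotents split in comodule categories) every idempotent endomorphism is `0` or `1`. -/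
def Comod.Indec (M : Comod K H) : Prop :=
  (∃ m : M.carrier, m ≠ 0) ∧
    ∀ f : ComodHom K H M M, f.toLin ∘ₗ f.toLin = f.toLin →
      f.toLin = 0 ∨ f.toLin = LinearMap.id

/-- A submodule of a comodule which is a subcomodule. -/
def IsSubcomod (M : Comod K H) (N : Submodule K M.carrier) : Prop :=
  ∀ m ∈ N, M.ρ m ∈ LinearMap.range (LinearMap.rTensor H N.subtype)

/-- The coaction of `M` factors through the subcoalgebra `D`, i.e. `M` is a `D`-comodule. -/
def CoactsThrough (M : Comod K H) (D : Submodule K H) : Prop :=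
  ∀ m : M.carrier, M.ρ m ∈ LinearMap.range (LinearMap.lTensor M.carrier D.subtype)

/-- `M` has dimension vector `d` : it admits a composition series whose successive quotients
are the one-dimensional comodules associated to grouplike elements, where for every `h` the
grouplike `h` occurs exactly `d h` times. -/
def HasDimVector (M : Comod K H) (d : H → ℕ) : Prop :=
  ∃ (k : ℕ) (F : Fin (k+1) → Submodule K M.carrier) (g : Fin k → H),
    F 0 = ⊥ ∧ F (Fin.last k) = ⊤ ∧
    (∀ i : Fin k, F i.castSucc ≤ F i.succ) ∧
    (∀ i : Fin (k+1), IsSubcomod K H M (F i)) ∧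
    (∀ i : Fin k, IsGrouplike K H (g i)) ∧
    (∀ i : Fin k, ∃ m : M.carrier, m ∈ F i.succ ∧ m ∉ F i.castSucc ∧
        F i.succ = F i.castSucc ⊔ Submodule.span K {m}) ∧
    (∀ i : Fin k, ∀ m ∈ F i.succ,
        M.ρ m - m ⊗ₜ[K] (g i) ∈ LinearMap.range (LinearMap.rTensor H (F i.castSucc).subtype)) ∧
    (∀ h : H, d h = Nat.card {i : Fin k // g i = h})

/-- A pointed coalgebra is of discrete corepresentation type if for every dimension vector `d`
there are only finitely many isomorphism classes of indecomposable comodules with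
dimension vector `d`. -/
def DiscreteCorepType : Prop :=
  ∀ d : H → ℕ, ∃ (N : ℕ) (R : Fin N → Comod K H),
    ∀ M : Comod K H, M.Indec K H → HasDimVector K H M d → ∃ i, ComodIso K H M (R i)

/-- A subcoalgebra `D ≤ H` is of finite corepresentation type: there are only finitely many
isomorphism classes of finite-dimensional indecomposable comodules whose coaction factors
through `D`. -/
def FinCorepTypeOn (D : Submodule K H) : Prop :=
  ∃ (N : ℕ) (R : Fin N → Comod K H),
    ∀ M : Comod K H, M.Indec K H → Module.Finite K M.carrier → CoactsThrough K H M D →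
      ∃ i, ComodIso K H M (R i)

/-- A coalgebra is of finite corepresentation type. -/
def FinCorepType : Prop := FinCorepTypeOn K H ⊤

end Comodules

open scoped Classical

section Pointed

variable (K : Type) [CommRing K] (H : Type) [Ring H] [Bialgebra K H]

/-- `g` is a grouplike element belonging to the subcoalgebra `B`. -/
def grouplikeIn (B : Submodule K H) (g : H) : Prop := IsGrouplike K H g ∧ g ∈ B

/-- In the Ext-quiver of the subcoalgebra `B`, there are exactly `c` arrows from the
grouplike `g` to the grouplike `h` : since the trivial skew primitive `g - h` is nonzero
precisely when `g ≠ h`, this says `dim (P(g,h) ⊓ B) = c + 1` for `g ≠ h`, and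
`dim (P(g,g) ⊓ B) = c` for loops. -/
def arrowsEq (B : Submodule K H) (g h : H) (c : ℕ) : Prop :=
  Module.rank K ↥(skewPrim K H g h ⊓ B) = if g = h then (c : Cardinal) else (c : Cardinal) + 1

/-- The number of arrows from `g` to `h` in the Ext-quiver, as a cardinal: the dimension of
the space of skew primitives modulo the trivial ones. -/
noncomputable def ntRank (g h : H) : Cardinal :=
  Module.rank K
    (↥(skewPrim K H g h) ⧸
      Submodule.comap (skewPrim K H g h).subtype (Submodule.span K {g - h}))

/-- Two grouplikes are linked in `D` if there is a nontrivial skew primitive (in either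
direction) between them lying in `D`. -/
def LinkedIn (D : Submodule K H) (g h : H) : Prop :=
  ∃ x ∈ D, (x ∈ skewPrim K H g h ∨ x ∈ skewPrim K H h g) ∧ x ∉ Submodule.span K {g - h}

/-- The Ext-quiver of the subcoalgebra `D` is connected. -/
def ConnectedOn (D : Submodule K H) : Prop :=
  ∀ g h : H, IsGrouplike K H g → g ∈ D → IsGrouplike K H h → h ∈ D →
    Relation.ReflTransGen (LinkedIn K H D) g h

/-- `B` is the link-indecomposable component containing `1` : a subcoalgebra containing `1`,
maximal with respect to its Ext-quiver being connected. -/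
structure IsLIC1 (B : Submodule K H) : Prop where
  subcoalg : IsSubcoalgebra K H B
  one_mem : (1 : H) ∈ B
  connected : ConnectedOn K H B
  maximal : ∀ B' : Submodule K H, IsSubcoalgebra K H B' → ConnectedOn K H B' →
    B ≤ B' → B' = B

end Pointed

/-- `a^i * a'^(-i)`, i.e. the `i`-th power (for `i : ℤ`) of `a` when `a'` is a two-sided
inverse of `a`. -/
def zp {B : Type} [Monoid B] (a a' : B) (i : ℤ) : B := a ^ i.toNat * a' ^ (-i).toNat

section Hopf

variable (K : Type) [CommRing K] (H : Type) [Ring H] [HopfAlgebra K H]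

/-- The antipode applied to an element; for a grouplike `g` this is its inverse `g⁻¹`. -/
noncomputable def inv' (g : H) : H := HopfAlgebra.antipode (R := K) g

/-- The Ext-quiver of the subcoalgebra `B` is the (possibly folded) grid quiver `Q^{m,n}` :
the grouplikes of `B` form the group `⟨a, b | ab = ba, aᵐ = bⁿ⟩`, and at each vertex `g`
there is exactly one arrow `g → g·a` and one arrow `g → g·b`, and no other arrows. -/
def GridQuiverOn (B : Submodule K H) (a b : H) (m n : ℤ) : Prop :=
  grouplikeIn K H B a ∧ grouplikeIn K H B b ∧ a * b = b * a ∧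
  a * inv' K H a = 1 ∧ inv' K H a * a = 1 ∧ b * inv' K H b = 1 ∧ inv' K H b * b = 1 ∧
  (∀ i j : ℤ, zp a (inv' K H a) i * zp b (inv' K H b) j = 1 ↔
      ∃ l : ℤ, i = l * m ∧ j = -(l * n)) ∧
  (∀ g : H, grouplikeIn K H B g ↔
      ∃ i j : ℤ, g = zp a (inv' K H a) i * zp b (inv' K H b) j) ∧
  (∀ g h : H, grouplikeIn K H B g → grouplikeIn K H B h →
      arrowsEq K H B g h (if h = g * a ∨ h = g * b then 1 else 0))

/-- The Ext-quiver of `B` is a single vertex, and `G(B) = {1}`. -/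
def SingleVertexQuiver (B : Submodule K H) : Prop :=
  (∀ g : H, grouplikeIn K H B g ↔ g = 1) ∧ arrowsEq K H B 1 1 0

/-- The Ext-quiver of `B` is a complete oriented cycle, and `G(B) = ⟨a | aⁿ = 1⟩`. -/
def CycleQuiver (B : Submodule K H) : Prop :=
  ∃ (a : H) (nn : ℕ), 0 < nn ∧ grouplikeIn K H B a ∧ a ^ nn = 1 ∧
    (∀ kk : ℕ, 0 < kk → kk < nn → a ^ kk ≠ 1) ∧
    (∀ g : H, grouplikeIn K H B g ↔ ∃ i : ℕ, g = a ^ i) ∧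
    (∀ g h : H, grouplikeIn K H B g → grouplikeIn K H B h →
      arrowsEq K H B g h (if h = g * a then 1 else 0))

/-- The Ext-quiver of `B` is the doubly infinite linear quiver `··· → · → · → ···`, and
`G(B) = ⟨a⟩` is infinite cyclic. -/
def LineQuiver (B : Submodule K H) : Prop :=
  ∃ a : H, grouplikeIn K H B a ∧ (∀ kk : ℕ, 0 < kk → a ^ kk ≠ 1) ∧
    (∀ g : H, grouplikeIn K H B g ↔ ∃ i j : ℕ, a ^ i * g = a ^ j) ∧
    (∀ g h : H, grouplikeIn K H B g → grouplikeIn K H B h →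
      arrowsEq K H B g h (if h = g * a then 1 else 0))

end Hopf

/-!
Conjugation by grouplikes acts on nontrivial skew primitives `x ∈ P(1, a)` and `y ∈ P(1, b)`, which
are unique up to scalars and trivial ones, by scalars: modulo trivial skew primitives `x a = q a x`,
`x b = s b x` and `y a = r a y`. The scalars are forced by discreteness. Words of length two in `x`
and `y` whose comultiplications have independent quadratic parts are independent modulo shorter
words, so there are comodules on which they act freely. If `s r ≠ 1`, this applies to `x y` and
`y x`, and a square of one-dimensional spaces whose two composites differ by a scalar `t` gives
pairwise non-isomorphic indecomposable comodules of the same dimension vector; if `q ≠ -1`, it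
applies to `x²`, and a configuration of four lines in a plane with cross-ratio `t` does the same.
Hence `s r = 1` and `q = -1`. As `char K ≠ 2`, adding a multiple of `1 - a` makes `x` anticommute
with `a`, and comparing `x (a b)` with `x (b a)` then shows that `x b = s b x` exactly. The required
scalar is `λ = -s`.
-/

section MultiplicativeMatrices

variable {K H : Type} [CommRing K] [AddCommGroup H] [Module K H] {ι : Type} [Fintype ι]
  [DecidableEq ι]

variable (K) in
/-- A multiplicative matrix over a coalgebra: the matrix coefficients of a right coaction on
`ι → K` with `ρ eⱼ = ∑ i, eᵢ ⊗ C i j`. -/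
structure IsMultiplicative [Coalgebra K H] (C : Matrix ι ι H) : Prop where
  comul_apply : ∀ i j, Coalgebra.comul (R := K) (C i j) = ∑ l, C i l ⊗ₜ[K] C l j
  counit_apply : ∀ i j, Coalgebra.counit (R := K) (C i j) = (1 : Matrix ι ι K) i j

/-- The coaction `ρ eⱼ = ∑ i, eᵢ ⊗ C i j` on `ι → K` with matrix coefficients `C`. -/
noncomputable def matrixCoaction (C : Matrix ι ι H) : (ι → K) →ₗ[K] (ι → K) ⊗[K] H :=
  ∑ i, TensorProduct.mk K (ι → K) H (Pi.single i 1) ∘ₗ Fintype.linearCombination K (C.row i)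

lemma matrixCoaction_apply (C : Matrix ι ι H) (v : ι → K) :
    matrixCoaction C v = ∑ i, (Pi.single i 1 : ι → K) ⊗ₜ[K] ∑ j, v j • C i j := by
  simp [matrixCoaction, Fintype.linearCombination_apply, tmul_sum]

lemma matrixCoaction_single (C : Matrix ι ι H) (j : ι) :
    matrixCoaction C (Pi.single j (1 : K)) = ∑ i, Pi.single i (1 : K) ⊗ₜ[K] C i j := by
  simp [matrixCoaction_apply, Pi.single_apply]

lemma rid_lTensor_matrixCoaction (C : Matrix ι ι H) (f : H →ₗ[K] K) (v : ι → K) :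
    TensorProduct.rid K (ι → K) (LinearMap.lTensor (ι → K) f (matrixCoaction C v)) =
      Matrix.mulVec (C.map f) v := by
  ext i
  simp [matrixCoaction_apply, Pi.single_apply, Matrix.mulVec, dotProduct, mul_comm]

variable [Coalgebra K H]

lemma IsMultiplicative.coassoc_matrixCoaction {C : Matrix ι ι H} (hC : IsMultiplicative K C) :
    LinearMap.lTensor (ι → K) Coalgebra.comul ∘ₗ matrixCoaction C =
      (TensorProduct.assoc K (ι → K) H H).toLinearMap ∘ₗ
        LinearMap.rTensor H (matrixCoaction C) ∘ₗ matrixCoaction C := by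
  refine (Pi.basisFun K ι).ext fun j => ?_
  simp only [Pi.basisFun_apply, LinearMap.comp_apply, matrixCoaction_single, map_sum,
    LinearMap.lTensor_tmul, LinearMap.rTensor_tmul, hC.comul_apply, sum_tmul, tmul_sum,
    LinearEquiv.coe_coe, TensorProduct.assoc_tmul]
  exact Finset.sum_comm

/-- The right comodule with coaction `ρ eⱼ = ∑ i, eᵢ ⊗ C i j`. -/
noncomputable abbrev IsMultiplicative.comod {C : Matrix ι ι H} (hC : IsMultiplicative K C) :
    Comod K H where
  carrier := ι → K
  ρ := matrixCoaction C
  counit_comp v := by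
    have hcounit : C.map (Coalgebra.counit (R := K)) = 1 := Matrix.ext hC.counit_apply
    rw [rid_lTensor_matrixCoaction, hcounit, Matrix.one_mulVec]
  coassoc := LinearMap.congr_fun hC.coassoc_matrixCoaction

lemma ComodHom.apply_rid_lTensor {M N : Comod K H} (φ : ComodHom K H M N) (f : H →ₗ[K] K)
    (m : M.carrier) :
    φ.toLin (TensorProduct.rid K M.carrier (LinearMap.lTensor M.carrier f (M.ρ m))) =
      TensorProduct.rid K N.carrier (LinearMap.lTensor N.carrier f (N.ρ (φ.toLin m))) := by
  rw [φ.compat]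
  induction M.ρ m using TensorProduct.induction_on with
  | zero => simp
  | tmul u v => simp
  | add s t hs ht => simp only [map_add, hs, ht]

lemma ComodHom.toMatrix'_mul_map {C D : Matrix ι ι H} {hC : IsMultiplicative K C}
    {hD : IsMultiplicative K D} (φ : ComodHom K H hC.comod hD.comod) (f : H →ₗ[K] K) :
    LinearMap.toMatrix' φ.toLin * C.map f = D.map f * LinearMap.toMatrix' φ.toLin := by
  refine Matrix.toLin'.injective (LinearMap.ext fun v => ?_)
  have h := φ.apply_rid_lTensor f v
  rw [rid_lTensor_matrixCoaction, rid_lTensor_matrixCoaction] at h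
  simpa only [Matrix.toLin'_mul, Matrix.toLin'_toMatrix', LinearMap.comp_apply,
    Matrix.toLin'_apply] using h

end MultiplicativeMatrices

section TriangularMatrices

variable {K H : Type} [CommRing K] [AddCommGroup H] [Module K H] {k : ℕ}

lemma sum_single_tmul_mem_range_flag {s : Fin (k + 1)} {u : Fin k → H}
    (hu : ∀ i, s ≤ i.castSucc → u i = 0) :
    ∑ i, (Pi.single i 1 : Fin k → K) ⊗ₜ[K] u i ∈
      LinearMap.range (LinearMap.rTensor H ((Pi.basisFun K (Fin k)).flag s).subtype) := by
  refine Submodule.sum_mem _ fun i _ => ?_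
  obtain hi | hi := le_or_gt s i.castSucc
  · simp [hu i hi]
  · have hmem := (Pi.basisFun K (Fin k)).self_mem_flag hi
    exact ⟨⟨_, hmem⟩ ⊗ₜ u i, by simp⟩

lemma apply_eq_zero_of_mem_flag {s : Fin (k + 1)} {v : Fin k → K}
    (hv : v ∈ (Pi.basisFun K (Fin k)).flag s) {i : Fin k} (hi : s ≤ i.castSucc) : v i = 0 :=
  (Pi.basisFun K (Fin k)).flag_le_ker_coord hi hv

lemma sum_smul_eq_zero_of_isUpperTriangular {C : Matrix (Fin k) (Fin k) H}
    (hC : C.IsUpperTriangular) {s : Fin (k + 1)} {v : Fin k → K}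
    (hv : v ∈ (Pi.basisFun K (Fin k)).flag s) {i : Fin k}
    (hi : s ≤ i.castSucc) : ∑ j, v j • C i j = 0 := by
  refine Finset.sum_eq_zero fun j _ => ?_
  obtain hij | hij := lt_or_ge j i
  · rw [hC hij, smul_zero]
  · rw [apply_eq_zero_of_mem_flag hv (hi.trans (Fin.castSucc_le_castSucc_iff.2 hij)), zero_smul]

lemma matrixCoaction_sub_tmul_mem {C : Matrix (Fin k) (Fin k) H} (hT : C.IsUpperTriangular)
    (i : Fin k) {v : Fin k → K}
    (hv : v ∈ (Pi.basisFun K (Fin k)).flag i.succ) :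
    matrixCoaction (K := K) C v - v ⊗ₜ[K] C i i ∈
      LinearMap.range (LinearMap.rTensor H ((Pi.basisFun K (Fin k)).flag i.castSucc).subtype) := by
  have expand : matrixCoaction C v - v ⊗ₜ[K] C i i =
      ∑ l, (Pi.single l 1 : Fin k → K) ⊗ₜ[K] (∑ j, v j • C l j - v l • C i i) := by
    have hv_sum : v ⊗ₜ[K] C i i = ∑ l, (Pi.single l 1 : Fin k → K) ⊗ₜ[K] (v l • C i i) := by
      simp only [← smul_tmul, ← Pi.single_smul, smul_eq_mul, mul_one, ← sum_tmul,
        Finset.univ_sum_single]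
    rw [matrixCoaction_apply, hv_sum, ← Finset.sum_sub_distrib]
    exact Finset.sum_congr rfl fun l _ => (tmul_sub _ _ _).symm
  rw [expand]
  refine sum_single_tmul_mem_range_flag fun l hl => ?_
  obtain rfl | hil := (Fin.castSucc_le_castSucc_iff.1 hl).eq_or_lt
  · rw [Finset.sum_eq_single_of_mem i (Finset.mem_univ i), sub_self]
    intro j _ hj
    obtain hji | hij := hj.lt_or_gt
    · rw [hT hji, smul_zero]
    · rw [apply_eq_zero_of_mem_flag hv (Fin.succ_le_castSucc_iff.2 hij), zero_smul]
  · have hl' : i.succ ≤ l.castSucc := Fin.succ_le_castSucc_iff.2 hil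
    rw [sum_smul_eq_zero_of_isUpperTriangular hT hv hl', apply_eq_zero_of_mem_flag hv hl',
      zero_smul, sub_zero]

namespace IsMultiplicative

variable [Coalgebra K H] {C : Matrix (Fin k) (Fin k) H} (hC : IsMultiplicative K C)
include hC

lemma isGrouplike_diag (hT : C.IsUpperTriangular) (i : Fin k) : IsGrouplike K H (C i i) := by
  refine ⟨by simp [hC.counit_apply], ?_⟩
  rw [hC.comul_apply, Finset.sum_eq_single_of_mem i (Finset.mem_univ i)]
  intro l _ hl
  obtain hli | hil := hl.lt_or_gt
  · rw [hT hli, zero_tmul]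
  · rw [hT hil, tmul_zero]

lemma isSubcomod_flag (hT : C.IsUpperTriangular) (s : Fin (k + 1)) :
    IsSubcomod K H hC.comod ((Pi.basisFun K (Fin k)).flag s) := by
  intro v hv
  rw [matrixCoaction_apply]
  exact sum_single_tmul_mem_range_flag fun i => sum_smul_eq_zero_of_isUpperTriangular hT hv

lemma hasDimVector [Nontrivial K] (hT : C.IsUpperTriangular) :
    HasDimVector K H hC.comod fun h => Nat.card {i : Fin k // C i i = h} := by
  let e := Pi.basisFun K (Fin k)
  refine ⟨k, e.flag, fun i => C i i, e.flag_zero, e.flag_last,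
    fun i => e.flag_mono i.castSucc_le_succ, hC.isSubcomod_flag hT, hC.isGrouplike_diag hT,
    fun i => ⟨e i, ?_, ?_, ?_⟩, fun i v hv => matrixCoaction_sub_tmul_mem hT i hv, fun h => rfl⟩
  · exact e.self_mem_flag i.castSucc_lt_succ
  · exact fun hi => lt_irrefl _ (e.self_mem_flag_iff.1 hi)
  · rw [e.flag_succ, sup_comm]

end IsMultiplicative

end TriangularMatrices

namespace ComodIso

variable {K H : Type} [CommRing K] [AddCommGroup H] [Module K H] [Coalgebra K H]

lemma symm {M N : Comod K H} (h : ComodIso K H M N) : ComodIso K H N M := by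
  obtain ⟨φ, hφ⟩ := h
  let e := LinearEquiv.ofBijective φ.toLin hφ
  refine ⟨⟨e.symm, fun n => ?_⟩, e.symm.bijective⟩
  obtain ⟨m, rfl⟩ := e.surjective n
  have hcompat : N.ρ (e m) = LinearMap.rTensor H e.toLinearMap (M.ρ m) := φ.compat m
  rw [LinearEquiv.coe_coe, e.symm_apply_apply, hcompat, ← LinearMap.comp_apply,
    ← LinearMap.rTensor_comp, LinearEquiv.symm_comp, LinearMap.rTensor_id, LinearMap.id_apply]

lemma trans {L M N : Comod K H} (h : ComodIso K H L M) (h' : ComodIso K H M N) :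
    ComodIso K H L N := by
  obtain ⟨φ, hφ⟩ := h
  obtain ⟨ψ, hψ⟩ := h'
  refine ⟨⟨ψ.toLin ∘ₗ φ.toLin, fun l => ?_⟩, hψ.comp hφ⟩
  rw [LinearMap.comp_apply, ψ.compat, φ.compat, LinearMap.rTensor_comp, LinearMap.comp_apply]

end ComodIso

section TriangularScalarDiagonal

variable {K : Type*} [Field K] {k : ℕ} {P : Matrix (Fin k) (Fin k) K} {α : K}

lemma isNilpotent_of_isUpperTriangular (hP : P.IsUpperTriangular) (hdiag : ∀ i, P i i = 0) :
    IsNilpotent P := by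
  refine ⟨k, ?_⟩
  simpa [P.charpoly_of_isUpperTriangular hP, hdiag] using P.aeval_self_charpoly

lemma isUnit_of_isUpperTriangular (hP : P.IsUpperTriangular) (hdiag : ∀ i, P i i = α)
    (hα : α ≠ 0) : IsUnit P := by
  rw [Matrix.isUnit_iff_isUnit_det, Matrix.det_of_isUpperTriangular hP]
  simp [hdiag, hα]

lemma eq_zero_or_one_of_isIdempotentElem_of_isUpperTriangular (hidem : IsIdempotentElem P)
    (hP : P.IsUpperTriangular) (hdiag : ∀ i, P i i = α) : P = 0 ∨ P = 1 := by
  obtain rfl | hα := eq_or_ne α 0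
  · exact .inl (hidem.eq_zero_of_isNilpotent (isNilpotent_of_isUpperTriangular hP hdiag))
  · exact .inr ((IsIdempotentElem.iff_eq_one_of_isUnit
      (isUnit_of_isUpperTriangular hP hdiag hα)).1 hidem)

end TriangularScalarDiagonal

section RigidFamilies

variable {K H : Type} [Field K] [AddCommGroup H] [Module K H] [Coalgebra K H] {k : ℕ} [NeZero k]

lemma IsMultiplicative.indec_comod {C : Matrix (Fin k) (Fin k) H} (hC : IsMultiplicative K C)
    (hend : ∀ P : Matrix (Fin k) (Fin k) K, (∀ f : H →ₗ[K] K, P * C.map f = C.map f * P) →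
      P.IsUpperTriangular ∧ ∃ α, ∀ i, P i i = α) :
    hC.comod.Indec K H := by
  refine ⟨⟨(Pi.single 0 1 : Fin k → K), by simp⟩, fun φ hφ => ?_⟩
  have hidem : IsIdempotentElem (LinearMap.toMatrix' φ.toLin) := by
    rw [IsIdempotentElem, ← LinearMap.toMatrix'_comp, hφ]
  obtain ⟨hP, α, hdiag⟩ := hend _ φ.toMatrix'_mul_map
  refine (eq_zero_or_one_of_isIdempotentElem_of_isUpperTriangular hidem hP hdiag).imp
    (fun h => ?_) fun h => ?_
  · exact LinearMap.toMatrix'.injective (h.trans (map_zero _).symm)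
  · exact LinearMap.toMatrix'.injective (h.trans LinearMap.toMatrix'_id.symm)

theorem not_discreteCorepType_of_rigid_family {ι : Type*} [Infinite ι]
    {C : ι → Matrix (Fin k) (Fin k) H} (hC : ∀ t, IsMultiplicative K (C t))
    (hT : ∀ t, (C t).IsUpperTriangular) (hdiag : ∀ t t' i, C t i i = C t' i i)
    (hrigid : ∀ t t' (P : Matrix (Fin k) (Fin k) K),
      (∀ f : H →ₗ[K] K, P * (C t).map f = (C t').map f * P) →
        P.IsUpperTriangular ∧ ∃ α, (∀ i, P i i = α) ∧ (α = 0 ∨ t = t')) :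
    ¬ DiscreteCorepType K H := by
  intro hdiscrete
  obtain ⟨t₀⟩ := (inferInstance : Nonempty ι)
  obtain ⟨N, R, hR⟩ := hdiscrete fun h => Nat.card {i : Fin k // C t₀ i i = h}
  have hindec : ∀ t, (hC t).comod.Indec K H := fun t => (hC t).indec_comod fun P hP =>
    (hrigid t t P hP).imp_right fun ⟨α, hα, _⟩ => ⟨α, hα⟩
  have hdim : ∀ t, HasDimVector K H (hC t).comod fun h => Nat.card {i : Fin k // C t₀ i i = h} := by
    intro t
    simpa only [hdiag t t₀] using (hC t).hasDimVector (hT t)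
  choose c hc using fun t => hR _ (hindec t) (hdim t)
  obtain ⟨t, t', hne, heq⟩ := Finite.exists_ne_map_eq_of_infinite c
  obtain ⟨φ, hφ⟩ := (hc t).trans (heq ▸ (hc t').symm)
  obtain ⟨hP, α, hα, hα0⟩ := hrigid t t' _ φ.toMatrix'_mul_map
  obtain rfl := hα0.resolve_right hne
  have hunit : IsUnit (LinearMap.toMatrix' φ.toLin) :=
    LinearMap.isUnit_toMatrix'_iff.2 ((Module.End.isUnit_iff _).2 hφ)
  exact hunit.not_isNilpotent (isNilpotent_of_isUpperTriangular hP hα)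

end RigidFamilies

section Contraction

variable {K H : Type*} [Field K] [Ring H] [HopfAlgebra K H]

lemma exists_dual_eq_of_linearIndependent {V I : Type*} [AddCommGroup V] [Module K V] {v : I → V}
    (hv : LinearIndependent K v) (c : I → K) : ∃ f : V →ₗ[K] K, ∀ i, f (v i) = c i := by
  obtain ⟨f, hf⟩ := ((Module.Basis.span hv).constr K c).exists_extend
  refine ⟨f, fun i => ?_⟩
  have h := LinearMap.congr_fun hf (Module.Basis.span hv i)
  rwa [Module.Basis.constr_basis, LinearMap.comp_apply, Submodule.subtype_apply,
    Module.Basis.span_apply] at h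

lemma exists_dual_eq_of_linearIndependent_mkQ {V I : Type*} [AddCommGroup V] [Module K V]
    {N : Submodule K V} {v : I → V} (hv : LinearIndependent K (N.mkQ ∘ v)) (c : I → K) :
    ∃ f : V →ₗ[K] K, (∀ x ∈ N, f x = 0) ∧ ∀ i, f (v i) = c i := by
  obtain ⟨f, hf⟩ := exists_dual_eq_of_linearIndependent hv c
  refine ⟨f ∘ₗ N.mkQ, fun x hx => ?_, hf⟩
  rw [LinearMap.comp_apply, (N.mkQ_apply x).trans ((Submodule.Quotient.mk_eq_zero N).2 hx),
    map_zero]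

lemma linearIndependent_mkQ_comp_iff {V I : Type*} [AddCommGroup V] [Module K V] [Fintype I]
    {N : Submodule K V} {v : I → V} :
    LinearIndependent K (N.mkQ ∘ v) ↔ ∀ c : I → K, ∑ i, c i • v i ∈ N → ∀ i, c i = 0 := by
  refine Fintype.linearIndependent_iff.trans (forall_congr' fun c => imp_congr_left ?_)
  rw [← Submodule.Quotient.mk_eq_zero N, ← N.mkQ_apply, map_sum]
  simp only [Function.comp_apply, map_smul]

/-- The left contraction `f ⊗ id` of the comultiplication, `h ↦ f(h₁) h₂`. -/
noncomputable def comulContractLeft (f : H →ₗ[K] K) : H →ₗ[K] H :=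
  (TensorProduct.lid K H).toLinearMap ∘ₗ LinearMap.rTensor H f ∘ₗ Coalgebra.comul

/-- The right contraction `id ⊗ f` of the comultiplication, `h ↦ h₁ f(h₂)`. -/
noncomputable def comulContractRight (f : H →ₗ[K] K) : H →ₗ[K] H :=
  (TensorProduct.rid K H).toLinearMap ∘ₗ LinearMap.lTensor H f ∘ₗ Coalgebra.comul

lemma comulContractLeft_groupLike (f : H →ₗ[K] K) (g : GroupLike K H) :
    comulContractLeft f (g : H) = f g • (g : H) := by
  simp [comulContractLeft]

lemma comulContractRight_groupLike (f : H →ₗ[K] K) (g : GroupLike K H) :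
    comulContractRight f (g : H) = f g • (g : H) := by
  simp [comulContractRight]

lemma comulContractLeft_groupLike_mul (f : H →ₗ[K] K) (g : GroupLike K H) (h : H) :
    comulContractLeft f ((g : H) * h) =
      g * comulContractLeft (f ∘ₗ LinearMap.mulLeft K (g : H)) h := by
  simp only [comulContractLeft, LinearMap.comp_apply, LinearEquiv.coe_coe, Bialgebra.comul_mul,
    g.isGroupLikeElem_val.comul_eq_tmul_self]
  induction Coalgebra.comul (R := K) h using TensorProduct.induction_on with
  | zero => simp
  | tmul u v => simp
  | add s t hs ht => simp only [mul_add, map_add, hs, ht]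

lemma counit_comulContractRight_counit (h : H) :
    Coalgebra.counit (R := K) (comulContractRight (Coalgebra.counit (R := K)) h) =
      Coalgebra.counit (R := K) h := by
  simp [comulContractRight]

/-- A subspace stable under left multiplication by grouplikes and under left contractions. -/
structure IsContractionStable (N : Submodule K H) : Prop where
  le_comap_mulLeft : ∀ g : GroupLike K H, N ≤ N.comap (LinearMap.mulLeft K (g : H))
  le_comap_comulContractLeft : ∀ f : H →ₗ[K] K, N ≤ N.comap (comulContractLeft f)

variable (K H) in
/-- The linear span of the grouplike elements. -/
noncomputable def groupLikeSpan : Submodule K H :=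
  Submodule.span K (Set.range (GroupLike.val (R := K) (A := H)))

lemma groupLike_mem_groupLikeSpan (g : GroupLike K H) : (g : H) ∈ groupLikeSpan K H :=
  Submodule.subset_span ⟨g, rfl⟩

variable (K H) in
lemma isContractionStable_groupLikeSpan : IsContractionStable (groupLikeSpan K H) where
  le_comap_mulLeft g := by
    refine Submodule.span_le.2 ?_
    rintro _ ⟨g', rfl⟩
    exact groupLike_mem_groupLikeSpan (g * g')
  le_comap_comulContractLeft f := by
    refine Submodule.span_le.2 ?_
    rintro _ ⟨g, rfl⟩
    rw [SetLike.mem_coe, Submodule.mem_comap, comulContractLeft_groupLike]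
    exact Submodule.smul_mem _ _ (groupLike_mem_groupLikeSpan g)

namespace IsContractionStable

variable {I : Type*} {N : Submodule K H} {v : I → H} (hN : IsContractionStable N)
  (hv : ∀ (f : H →ₗ[K] K) i, comulContractLeft f (v i) - f 1 • v i ∈ N)
include hN hv

lemma comulContractLeft_groupLike_mul_sub_mem (f : H →ₗ[K] K) (g : GroupLike K H) (i : I) :
    comulContractLeft f ((g : H) * v i) - f g • ((g : H) * v i) ∈ N := by
  rw [comulContractLeft_groupLike_mul, ← mul_smul_comm, ← mul_sub]
  simpa using hN.le_comap_mulLeft g (hv (f ∘ₗ LinearMap.mulLeft K (g : H)) i)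

lemma sup_span :
    IsContractionStable
      (N ⊔ Submodule.span K (Set.range fun gi : GroupLike K H × I => (gi.1 : H) * v gi.2)) where
  le_comap_mulLeft g := by
    refine sup_le (fun h hh => Submodule.mem_sup_left (hN.le_comap_mulLeft g hh))
      (Submodule.span_le.2 ?_)
    rintro _ ⟨⟨g', i⟩, rfl⟩
    exact Submodule.mem_sup_right (Submodule.subset_span ⟨(g * g', i), by simp [mul_assoc]⟩)
  le_comap_comulContractLeft f := by
    refine sup_le (fun h hh => Submodule.mem_sup_left (hN.le_comap_comulContractLeft f hh))
      (Submodule.span_le.2 ?_)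
    rintro _ ⟨⟨g, i⟩, rfl⟩
    have hmod := hN.comulContractLeft_groupLike_mul_sub_mem hv f g i
    rw [SetLike.mem_coe, Submodule.mem_comap]
    refine (Submodule.sub_mem_iff_left _ ?_).1 (Submodule.mem_sup_left hmod)
    exact Submodule.smul_mem _ _ (Submodule.mem_sup_right (Submodule.subset_span ⟨(g, i), rfl⟩))

lemma linearIndependent_groupLike_mul (hLI : LinearIndependent K (N.mkQ ∘ v)) :
    LinearIndependent K (N.mkQ ∘ fun gi : GroupLike K H × I => (gi.1 : H) * v gi.2) := by
  choose e he using fun g₀ : GroupLike K H => exists_dual_eq_of_linearIndependent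
    (linearIndep_groupLikeVal (R := K) (A := H)) fun g => if g = g₀ then 1 else 0
  choose χ hχN hχ using fun i₀ => exists_dual_eq_of_linearIndependent_mkQ hLI
    fun i => if i = i₀ then 1 else 0
  let ψ (gi : GroupLike K H × I) : H →ₗ[K] K :=
    χ gi.2 ∘ₗ LinearMap.mulLeft K ((gi.1⁻¹ : GroupLike K H) : H) ∘ₗ comulContractLeft (e gi.1)
  have hψN : ∀ gi, N ≤ LinearMap.ker (ψ gi) := fun gi h hh =>
    hχN _ _ (hN.le_comap_mulLeft _ (hN.le_comap_comulContractLeft _ hh))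
  have hψ : ∀ gi₀ gi : GroupLike K H × I,
      ψ gi₀ ((gi.1 : H) * v gi.2) = if gi = gi₀ then 1 else 0 := by
    rintro ⟨g₀, i₀⟩ ⟨g, i⟩
    have hmem := hχN i₀ _ (hN.le_comap_mulLeft g₀⁻¹
      (hN.comulContractLeft_groupLike_mul_sub_mem hv (e g₀) g i))
    rw [map_sub, map_sub, sub_eq_zero, he] at hmem
    obtain rfl | hg := eq_or_ne g g₀
    · simpa [ψ, ← mul_assoc, hχ] using hmem
    · simpa [ψ, hg] using hmem
  exact .of_pairwise_dual_eq_zero_one _ (fun gi => N.liftQ (ψ gi) (hψN gi))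
    (fun gi₀ gi hne => by simp [hψ, hne.symm]) fun gi => by simp [hψ]

end IsContractionStable

end Contraction

/-- Skew primitives `z p ∈ P(1, d p)`, nontrivial and with distinct degrees, together with elements
`w k` that behave like quadratic polynomials in the `z p`: modulo the skew primitive part, `Δ (w k)`
is the form `m k` in the `z p`. The forms `n k` witness the linear independence of the `m k`. -/
structure QuadraticSystem (K H : Type) [Field K] [Ring H] [HopfAlgebra K H] (ι κ : Type) [Fintype ι]
    [Fintype κ] [DecidableEq κ] where
  d : ι → GroupLike K H
  z : ι → H
  e : κ → GroupLike K H
  w : κ → H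
  m : κ → Matrix ι ι K
  n : κ → Matrix ι ι K
  d_injective : Function.Injective d
  comul_z : ∀ p, Coalgebra.comul (R := K) (z p) = 1 ⊗ₜ[K] z p + z p ⊗ₜ[K] (d p : H)
  z_notMem : ∀ p, z p ∉ Submodule.span K {1 - (d p : H)}
  comul_w : ∀ k, Coalgebra.comul (R := K) (w k) =
    1 ⊗ₜ[K] w k + ∑ p, ∑ q, m k p q • (z p ⊗ₜ[K] ((d p : H) * z q)) + w k ⊗ₜ[K] (e k : H)
  dual : ∀ k l, ∑ p, ∑ q, m k p q * n l p q = if k = l then 1 else 0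
  homogeneous : ∀ k p q, n k p q ≠ 0 → d p * d q = e k

namespace QuadraticSystem

variable {K H : Type} [Field K] [Ring H] [HopfAlgebra K H] {ι κ : Type} [Fintype ι] [Fintype κ]
  [DecidableEq κ] (S : QuadraticSystem K H ι κ)

lemma counit_z (p : ι) : Coalgebra.counit (R := K) (S.z p) = 0 := by
  have h := counit_comulContractRight_counit (K := K) (S.z p)
  simpa [comulContractRight, S.comul_z] using h

lemma counit_w (k : κ) : Coalgebra.counit (R := K) (S.w k) = 0 := by
  have h := counit_comulContractRight_counit (K := K) (S.w k)
  simpa [comulContractRight, S.comul_w, S.counit_z] using h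

lemma comulContractLeft_z (f : H →ₗ[K] K) (p : ι) :
    comulContractLeft f (S.z p) = f 1 • S.z p + f (S.z p) • (S.d p : H) := by
  simp [comulContractLeft, S.comul_z]

lemma comulContractRight_z (f : H →ₗ[K] K) (p : ι) :
    comulContractRight f (S.z p) = f (S.z p) • 1 + f (S.d p) • S.z p := by
  simp [comulContractRight, S.comul_z]

lemma comulContractLeft_w (f : H →ₗ[K] K) (k : κ) :
    comulContractLeft f (S.w k) =
      f 1 • S.w k + ∑ p, ∑ q, (S.m k p q * f (S.z p)) • ((S.d p : H) * S.z q) +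
        f (S.w k) • (S.e k : H) := by
  simp [comulContractLeft, S.comul_w, mul_smul]

/-- The span of the grouplikes `g` and of the `g * z p`. -/
noncomputable def degreeOne : Submodule K H :=
  groupLikeSpan K H ⊔
    Submodule.span K (Set.range fun gp : GroupLike K H × ι => (gp.1 : H) * S.z gp.2)

lemma groupLike_mul_z_mem_degreeOne (g : GroupLike K H) (p : ι) : (g : H) * S.z p ∈ S.degreeOne :=
  Submodule.mem_sup_right (Submodule.subset_span ⟨(g, p), rfl⟩)

lemma comulContractLeft_z_sub_mem (f : H →ₗ[K] K) (p : ι) :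
    comulContractLeft f (S.z p) - f 1 • S.z p ∈ groupLikeSpan K H := by
  rw [comulContractLeft_z, add_sub_cancel_left]
  exact Submodule.smul_mem _ _ (groupLike_mem_groupLikeSpan _)

lemma comulContractLeft_w_sub_mem (f : H →ₗ[K] K) (k : κ) :
    comulContractLeft f (S.w k) - f 1 • S.w k ∈ S.degreeOne := by
  rw [comulContractLeft_w, add_assoc, add_sub_cancel_left]
  refine add_mem (sum_mem fun p _ => sum_mem fun q _ => ?_) ?_
  · exact Submodule.smul_mem _ _ (S.groupLike_mul_z_mem_degreeOne _ q)
  · exact Submodule.smul_mem _ _ (Submodule.mem_sup_left (groupLike_mem_groupLikeSpan _))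

lemma isContractionStable_degreeOne : IsContractionStable S.degreeOne :=
  (isContractionStable_groupLikeSpan K H).sup_span S.comulContractLeft_z_sub_mem

lemma linearIndependent_z : LinearIndependent K ((groupLikeSpan K H).mkQ ∘ S.z) := by
  refine linearIndependent_mkQ_comp_iff.2 fun c hc p => by_contra fun hcp => S.z_notMem p ?_
  obtain ⟨f, hf⟩ := exists_dual_eq_of_linearIndependent
    (linearIndep_groupLikeVal (R := K) (A := H)) fun g => if g = S.d p then 1 else 0
  have hspan : groupLikeSpan K H ≤
      (Submodule.span K {(S.d p : H)}).comap (comulContractRight f) := by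
    refine Submodule.span_le.2 ?_
    rintro _ ⟨g, rfl⟩
    rw [SetLike.mem_coe, Submodule.mem_comap, comulContractRight_groupLike, hf]
    obtain rfl | hg := eq_or_ne g (S.d p)
    · exact Submodule.smul_mem _ _ (Submodule.mem_span_singleton_self _)
    · simp [hg]
  obtain ⟨β, hβ⟩ := Submodule.mem_span_singleton.1 (hspan hc)
  have hz : β • (S.d p : H) = (∑ q, c q * f (S.z q)) • 1 + c p • S.z p := by
    simpa [comulContractRight_z, hf, S.d_injective.eq_iff, Finset.sum_add_distrib, Finset.sum_smul,
      smul_smul] using hβ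
  have hβ' : β = ∑ q, c q * f (S.z q) := by
    simpa [S.counit_z] using congrArg (Coalgebra.counit (R := K)) hz
  have hz' : S.z p = -((c p)⁻¹ * β) • (1 - (S.d p : H)) := by
    rw [← inv_smul_smul₀ hcp (S.z p), ← sub_eq_iff_eq_add'.2 hz, ← hβ', ← smul_sub, smul_smul,
      ← neg_sub, smul_neg, neg_smul]
  exact hz' ▸ Submodule.smul_mem _ _ (Submodule.mem_span_singleton_self _)

lemma exists_dual_degreeOne (p₀ : ι) :
    ∃ f : H →ₗ[K] K, (∀ h ∈ groupLikeSpan K H, f h = 0) ∧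
      ∀ g : GroupLike K H, ∀ p, f (g * S.z p) = if p = p₀ then 1 else 0 := by
  obtain ⟨f, hf₀, hf₁⟩ := exists_dual_eq_of_linearIndependent_mkQ
    ((isContractionStable_groupLikeSpan K H).linearIndependent_groupLike_mul
      S.comulContractLeft_z_sub_mem S.linearIndependent_z)
    fun gp => if gp.2 = p₀ then 1 else 0
  exact ⟨f, hf₀, fun g p => hf₁ (g, p)⟩

lemma comulContractLeft_degreeOne_le {f : H →ₗ[K] K} (hf : ∀ h ∈ groupLikeSpan K H, f h = 0) :
    S.degreeOne ≤ (groupLikeSpan K H).comap (comulContractLeft f) := by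
  refine sup_le ((isContractionStable_groupLikeSpan K H).le_comap_comulContractLeft f)
    (Submodule.span_le.2 ?_)
  rintro _ ⟨⟨g, p⟩, rfl⟩
  have hmod := (isContractionStable_groupLikeSpan K H).comulContractLeft_groupLike_mul_sub_mem
    S.comulContractLeft_z_sub_mem f g p
  rwa [hf _ (groupLike_mem_groupLikeSpan g), zero_smul, sub_zero] at hmod

lemma sum_mul_m_eq_zero {c : κ → K} (hc : ∑ k, c k • S.w k ∈ S.degreeOne) (p q : ι) :
    ∑ k, c k * S.m k p q = 0 := by
  obtain ⟨f, hf₀, hf₁⟩ := S.exists_dual_degreeOne p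
  have hz : ∀ q, f (S.z q) = if q = p then 1 else 0 := fun q => by simpa using hf₁ 1 q
  have h1 : f 1 = 0 := hf₀ _ (groupLike_mem_groupLikeSpan 1)
  have hcontract : comulContractLeft f (∑ k, c k • S.w k) =
      ∑ q, (∑ k, c k * S.m k p q) • ((S.d p : H) * S.z q) +
        ∑ k, (c k * f (S.w k)) • (S.e k : H) := by
    simp only [map_sum, map_smul, comulContractLeft_w, h1, hz, zero_smul, zero_add, mul_ite,
      mul_one, mul_zero, ite_smul, Finset.sum_ite_irrel, Finset.sum_const_zero,
      Finset.sum_ite_eq', Finset.mem_univ, if_true, smul_add, Finset.sum_add_distrib,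
      Finset.smul_sum, smul_smul, Finset.sum_smul]
    rw [Finset.sum_comm]
  have hmem := S.comulContractLeft_degreeOne_le hf₀ hc
  have hgroupLike : ∑ k, (c k * f (S.w k)) • (S.e k : H) ∈ groupLikeSpan K H :=
    sum_mem fun k _ => Submodule.smul_mem _ _ (groupLike_mem_groupLikeSpan _)
  rw [Submodule.mem_comap, hcontract, Submodule.add_mem_iff_left _ hgroupLike] at hmem
  have hLI := (isContractionStable_groupLikeSpan K H).linearIndependent_groupLike_mul
    S.comulContractLeft_z_sub_mem S.linearIndependent_z
  exact linearIndependent_mkQ_comp_iff.1 (hLI.comp _ (Prod.mk_right_injective (S.d p))) _ hmem q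

lemma linearIndependent_w : LinearIndependent K (S.degreeOne.mkQ ∘ S.w) := by
  refine linearIndependent_mkQ_comp_iff.2 fun c hc l => ?_
  calc c l = ∑ k, c k * ∑ p, ∑ q, S.m k p q * S.n l p q := by simp [S.dual]
    _ = ∑ p, ∑ q, (∑ k, c k * S.m k p q) * S.n l p q := by
      simp only [Finset.mul_sum, Finset.sum_mul, mul_assoc]
      rw [Finset.sum_comm]
      exact Finset.sum_congr rfl fun p _ => Finset.sum_comm
    _ = 0 := by simp [S.sum_mul_m_eq_zero hc]

lemma exists_dual (p₀ : ι) :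
    ∃ f : H →ₗ[K] K, (∀ g : GroupLike K H, f g = 0) ∧
      (∀ g : GroupLike K H, ∀ p, f (g * S.z p) = if p = p₀ then 1 else 0) ∧
      ∀ g : GroupLike K H, ∀ k, f (g * S.w k) = 0 := by
  obtain ⟨f, hf₀, hf₁⟩ := S.exists_dual_degreeOne p₀
  obtain ⟨f', hf'₁, hf'₂⟩ := exists_dual_eq_of_linearIndependent_mkQ
    (S.isContractionStable_degreeOne.linearIndependent_groupLike_mul
      S.comulContractLeft_w_sub_mem S.linearIndependent_w) fun gk => f (gk.1 * S.w gk.2)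
  refine ⟨f - f', fun g => ?_, fun g p => ?_, fun g k => ?_⟩
  · have hg := groupLike_mem_groupLikeSpan (K := K) g
    simp [hf₀ _ hg, hf'₁ _ (Submodule.mem_sup_left hg)]
  · simp [hf₁, hf'₁ _ (S.groupLike_mul_z_mem_degreeOne g p)]
  · simpa using sub_eq_zero.2 (hf'₂ (g, k)).symm

end QuadraticSystem

section GradedMatrices

variable {K A : Type} [Field K] [Ring A] [Algebra K A] {k : Type}

/-- The bilinear map sending a scalar matrix `M` and `h : A` to the matrix with entries
`M i j • (γ i * h)`. -/
noncomputable def gradedMatrix (γ : k → A) : Matrix k k K →ₗ[K] A →ₗ[K] Matrix k k A :=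
  LinearMap.mk₂ K (fun M h => Matrix.of fun i j => M i j • (γ i * h))
    (fun _ _ _ => by ext; simp [add_smul]) (fun _ _ _ => by ext; simp [mul_smul])
    (fun _ _ _ => by ext; simp [mul_add]) (fun c _ _ => by ext; simp [smul_comm c])

@[simp]
lemma gradedMatrix_apply (γ : k → A) (M : Matrix k k K) (h : A) (i j : k) :
    gradedMatrix γ M h i j = M i j • (γ i * h) := rfl

variable {H : Type} [Ring H] [HopfAlgebra K H] (γ : k → GroupLike K H)

/-- A scalar matrix of degree `d` with respect to the grading `γ` of the standard basis. -/
def IsHomogeneous (d : GroupLike K H) (M : Matrix k k K) : Prop :=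
  ∀ i j, M i j ≠ 0 → γ i * d = γ j

lemma gradedMatrix_map_comul (M : Matrix k k K) (h : H) :
    (gradedMatrix (fun i => (γ i : H)) M h).map (Coalgebra.comul (R := K)) =
      gradedMatrix (fun i => (γ i : H) ⊗ₜ[K] (γ i : H)) M (Coalgebra.comul (R := K) h) := by
  ext i j
  simp

variable {γ}

lemma IsHomogeneous.one [DecidableEq k] : IsHomogeneous γ 1 (1 : Matrix k k K) := by
  intro i j hij
  obtain rfl : i = j := by_contra fun h => hij (Matrix.one_apply_ne h)
  exact mul_one _

lemma IsHomogeneous.sum_smul {ι : Type*} [Fintype ι] {d : GroupLike K H} {c : ι → K}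
    {M : ι → Matrix k k K} (hM : ∀ p, c p ≠ 0 → IsHomogeneous γ d (M p)) :
    IsHomogeneous γ d (∑ p, c p • M p) := by
  intro i j hij
  rw [Matrix.sum_apply] at hij
  obtain ⟨p, -, hp⟩ := Finset.exists_ne_zero_of_sum_ne_zero hij
  exact hM p (left_ne_zero_of_mul hp) i j (right_ne_zero_of_mul hp)

variable [Fintype k]

lemma IsHomogeneous.mul {d d' : GroupLike K H} {M N : Matrix k k K} (hM : IsHomogeneous γ d M)
    (hN : IsHomogeneous γ d' N) : IsHomogeneous γ (d * d') (M * N) := by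
  intro i j hij
  obtain ⟨l, -, hl⟩ := Finset.exists_ne_zero_of_sum_ne_zero hij
  rw [← mul_assoc, hM i l (left_ne_zero_of_mul hl), hN l j (right_ne_zero_of_mul hl)]

lemma IsHomogeneous.gradedMatrix_mul [DecidableEq k] {d : GroupLike K H} {M : Matrix k k K}
    (hM : IsHomogeneous γ d M) (N : Matrix k k K) (x y : H) :
    (Algebra.TensorProduct.includeLeft : H →ₐ[K] H ⊗[K] H).mapMatrix
        (gradedMatrix (fun i => (γ i : H)) M x) *
      (Algebra.TensorProduct.includeRight : H →ₐ[K] H ⊗[K] H).mapMatrix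
        (gradedMatrix (fun i => (γ i : H)) N y) =
      gradedMatrix (fun i => (γ i : H) ⊗ₜ[K] (γ i : H)) (M * N) (x ⊗ₜ[K] ((d : H) * y)) := by
  ext i j
  simp only [Matrix.mul_apply, AlgHom.mapMatrix_apply, Matrix.map_apply, gradedMatrix_apply,
    Finset.sum_smul, map_smul]
  refine Finset.sum_congr rfl fun l _ => ?_
  by_cases hil : M i l = 0
  · simp [hil]
  · simp [← hM i l hil, mul_smul, smul_comm (N l j), mul_assoc]

end GradedMatrices

namespace QuadraticSystem

variable {K H : Type} [Field K] [Ring H] [HopfAlgebra K H] {ι κ : Type} [Fintype ι] [Fintype κ]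
  [DecidableEq κ] (S : QuadraticSystem K H ι κ) {k : ℕ}

/-- The matrix through which `w l` acts when `z p` acts through `X p`. -/
def wMatrix (X : ι → Matrix (Fin k) (Fin k) K) (l : κ) : Matrix (Fin k) (Fin k) K :=
  ∑ pq : ι × ι, S.n l pq.1 pq.2 • (X pq.1 * X pq.2)

/-- Matrices through which the `z p` act on a comodule with basis graded by `γ`: they are strictly
triangular, have the degrees of the `z p`, satisfy the quadratic relations encoded by the `w l`, and
all their triple products vanish. -/
structure IsRep (γ : Fin k → GroupLike K H) (X : ι → Matrix (Fin k) (Fin k) K) : Prop where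
  isHomogeneous : ∀ p, IsHomogeneous γ (S.d p) (X p)
  lt_of_ne_zero : ∀ p i j, X p i j ≠ 0 → i < j
  mul_eq : ∀ p q, X p * X q = ∑ l, S.m l p q • S.wMatrix X l
  mul_mul_eq_zero : ∀ p q r, X p * X q * X r = 0

/-- The coefficient matrix of the comodule on which `z p` acts through `X p`. -/
noncomputable def coefficientMatrix (γ : Fin k → GroupLike K H)
    (X : ι → Matrix (Fin k) (Fin k) K) : Matrix (Fin k) (Fin k) H :=
  gradedMatrix (fun i => (γ i : H)) (1 : Matrix _ _ K) 1 +
    ∑ p, gradedMatrix (fun i => (γ i : H)) (X p) (S.z p) +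
    ∑ l, gradedMatrix (fun i => (γ i : H)) (S.wMatrix X l) (S.w l)

lemma map_coefficientMatrix {f : H →ₗ[K] K} {p₀ : ι} (hf₀ : ∀ g : GroupLike K H, f g = 0)
    (hf₁ : ∀ g : GroupLike K H, ∀ p, f (g * S.z p) = if p = p₀ then 1 else 0)
    (hf₂ : ∀ g : GroupLike K H, ∀ l, f (g * S.w l) = 0) (γ : Fin k → GroupLike K H)
    (X : ι → Matrix (Fin k) (Fin k) K) : (S.coefficientMatrix γ X).map f = X p₀ := by
  ext i j
  simp [coefficientMatrix, Matrix.sum_apply, hf₀, hf₁, hf₂]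

namespace IsRep

variable {S} {γ : Fin k → GroupLike K H} {X : ι → Matrix (Fin k) (Fin k) K} (hX : S.IsRep γ X)
include hX

lemma apply_eq_zero {p : ι} {i j : Fin k} (hji : j ≤ i) : X p i j = 0 :=
  by_contra fun h => hji.not_gt (hX.lt_of_ne_zero p i j h)

lemma wMatrix_apply_eq_zero {l : κ} {i j : Fin k} (hji : j ≤ i) : S.wMatrix X l i j = 0 := by
  refine (Matrix.sum_apply _ _ _ _).trans (Finset.sum_eq_zero fun pq _ => ?_)
  rw [Matrix.smul_apply, Matrix.mul_apply, Finset.sum_eq_zero, smul_zero]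
  intro r _
  obtain hri | hir := le_or_gt r i
  · rw [hX.apply_eq_zero hri, zero_mul]
  · rw [hX.apply_eq_zero (hji.trans hir.le), mul_zero]

lemma coefficientMatrix_apply_of_le {i j : Fin k} (hji : j ≤ i) :
    S.coefficientMatrix γ X i j = (1 : Matrix (Fin k) (Fin k) K) i j • (γ i : H) := by
  simp [coefficientMatrix, Matrix.sum_apply, hX.apply_eq_zero hji, hX.wMatrix_apply_eq_zero hji]

lemma isUpperTriangular_coefficientMatrix : (S.coefficientMatrix γ X).IsUpperTriangular :=
  fun i j (hij : j < i) => by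
    rw [hX.coefficientMatrix_apply_of_le hij.le, Matrix.one_apply_ne hij.ne', zero_smul]

lemma isHomogeneous_wMatrix (l : κ) : IsHomogeneous γ (S.e l) (S.wMatrix X l) :=
  .sum_smul fun pq hpq => S.homogeneous l pq.1 pq.2 hpq ▸
    (hX.isHomogeneous pq.1).mul (hX.isHomogeneous pq.2)

lemma mul_wMatrix (p : ι) (l : κ) : X p * S.wMatrix X l = 0 := by
  simp [wMatrix, Finset.mul_sum, ← mul_assoc, hX.mul_mul_eq_zero]

lemma wMatrix_mul (l : κ) (p : ι) : S.wMatrix X l * X p = 0 := by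
  simp [wMatrix, Finset.sum_mul, hX.mul_mul_eq_zero]

lemma wMatrix_mul_wMatrix (l l' : κ) : S.wMatrix X l * S.wMatrix X l' = 0 := by
  rw [wMatrix, Finset.sum_mul]
  simp [mul_assoc, hX.mul_wMatrix]

lemma sum_map_mul {V V' : Type*} [AddCommGroup V] [Module K V] [AddCommGroup V'] [Module K V']
    (F : Matrix (Fin k) (Fin k) K →ₗ[K] V →ₗ[K] V') (v : ι → ι → V) :
    ∑ p, ∑ q, F (X p * X q) (v p q) =
      ∑ l, F (S.wMatrix X l) (∑ p, ∑ q, S.m l p q • v p q) := by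
  simp only [hX.mul_eq, map_sum, map_smul, LinearMap.sum_apply, LinearMap.smul_apply]
  exact (Finset.sum_congr rfl fun p _ => Finset.sum_comm).trans Finset.sum_comm

lemma mapMatrix_comul_coefficientMatrix :
    (Coalgebra.comul : H →ₗ[K] H ⊗[K] H).mapMatrix (S.coefficientMatrix γ X) =
      (Algebra.TensorProduct.includeLeft : H →ₐ[K] H ⊗[K] H).mapMatrix (S.coefficientMatrix γ X) *
        (Algebra.TensorProduct.includeRight : H →ₐ[K] H ⊗[K] H).mapMatrix
          (S.coefficientMatrix γ X) := by
  set F := gradedMatrix (K := K) fun i => (γ i : H) ⊗ₜ[K] (γ i : H) with hF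
  have hcomul : (Coalgebra.comul : H →ₗ[K] H ⊗[K] H).mapMatrix (S.coefficientMatrix γ X) =
      F 1 (1 ⊗ₜ 1) + ∑ p, F (X p) (1 ⊗ₜ S.z p + S.z p ⊗ₜ (S.d p : H)) +
        ∑ l, F (S.wMatrix X l) (1 ⊗ₜ S.w l +
          ∑ p, ∑ q, S.m l p q • (S.z p ⊗ₜ ((S.d p : H) * S.z q)) + S.w l ⊗ₜ (S.e l : H)) := by
    simp only [coefficientMatrix, map_add, map_sum, LinearMap.mapMatrix_apply,
      gradedMatrix_map_comul, Bialgebra.comul_one, Algebra.TensorProduct.one_def, S.comul_z,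
      S.comul_w, F]
  have hquad : ∑ q, ∑ p, F (X p * X q) (S.z p ⊗ₜ ((S.d p : H) * S.z q)) =
      ∑ l, F (S.wMatrix X l) (∑ p, ∑ q, S.m l p q • (S.z p ⊗ₜ ((S.d p : H) * S.z q))) :=
    Finset.sum_comm.trans (hX.sum_map_mul F _)
  rw [hcomul]
  simp only [coefficientMatrix, map_add, map_sum (AlgHom.mapMatrix _), add_mul, mul_add,
    Finset.mul_sum, Finset.sum_mul, IsHomogeneous.one.gradedMatrix_mul,
    (hX.isHomogeneous _).gradedMatrix_mul, (hX.isHomogeneous_wMatrix _).gradedMatrix_mul,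
    hX.mul_wMatrix, hX.wMatrix_mul, hX.wMatrix_mul_wMatrix, map_zero, LinearMap.zero_apply,
    Finset.sum_const_zero, add_zero, one_mul, mul_one, GroupLike.val_one, Finset.sum_add_distrib]
  rw [← hF, hquad]
  abel

lemma isMultiplicative_coefficientMatrix : IsMultiplicative K (S.coefficientMatrix γ X) where
  comul_apply i j := by
    simpa [Matrix.mul_apply] using congrFun₂ hX.mapMatrix_comul_coefficientMatrix i j
  counit_apply i j := by
    simp [coefficientMatrix, Matrix.sum_apply, S.counit_z, S.counit_w]

end IsRep

theorem not_discreteCorepType_of_isRep {T : Type*} [Infinite T] [NeZero k]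
    {γ : Fin k → GroupLike K H} {X : T → ι → Matrix (Fin k) (Fin k) K}
    (hX : ∀ t, S.IsRep γ (X t))
    (hrigid : ∀ t t' (P : Matrix (Fin k) (Fin k) K), (∀ p, P * X t p = X t' p * P) →
      P.IsUpperTriangular ∧ ∃ α, (∀ i, P i i = α) ∧ (α = 0 ∨ t = t')) :
    ¬ DiscreteCorepType K H := by
  refine not_discreteCorepType_of_rigid_family
    (fun t => (hX t).isMultiplicative_coefficientMatrix)
    (fun t => (hX t).isUpperTriangular_coefficientMatrix) (fun t t' i => ?_)
    fun t t' P hP => hrigid t t' P fun p => ?_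
  · rw [(hX t).coefficientMatrix_apply_of_le le_rfl, (hX t').coefficientMatrix_apply_of_le le_rfl]
  · obtain ⟨f, hf₀, hf₁, hf₂⟩ := S.exists_dual p
    simpa only [S.map_coefficientMatrix hf₀ hf₁ hf₂] using hP f

end QuadraticSystem

section Families

/-- A matrix all of whose nonzero entries `M i j` satisfy `i < j` and shift the bidegree `δ` by
`ε`. -/
def IsShift {R : Type*} [Zero R] {k : ℕ} (δ : Fin k → ℕ × ℕ) (ε : ℕ × ℕ)
    (M : Matrix (Fin k) (Fin k) R) : Prop :=
  ∀ i j, M i j ≠ 0 → i < j ∧ δ j = δ i + ε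

section Representations

variable {K H : Type} [Field K] [Ring H] [HopfAlgebra K H]

lemma IsShift.isHomogeneous {a b : GroupLike K H} (hab : Commute a b) {k : ℕ}
    {δ : Fin k → ℕ × ℕ} {ε : ℕ × ℕ} {M : Matrix (Fin k) (Fin k) K} (hM : IsShift δ ε M) :
    IsHomogeneous (fun i => a ^ (δ i).1 * b ^ (δ i).2) (a ^ ε.1 * b ^ ε.2) M := by
  intro i j hij
  simp only [(hM i j hij).2, Prod.fst_add, Prod.snd_add, pow_add]
  exact (hab.pow_pow _ _).symm.mul_mul_mul_comm _ _

lemma QuadraticSystem.isRep_pair {κ : Type} [Fintype κ] [DecidableEq κ]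
    (S : QuadraticSystem K H (Fin 2) κ) (hd : Commute (S.d 0) (S.d 1)) {k : ℕ}
    {δ : Fin k → ℕ × ℕ} {X Y : Matrix (Fin k) (Fin k) K} {c : K} (hX : IsShift δ (1, 0) X)
    (hY : IsShift δ (0, 1) Y) (hYX : Y * X = c • (X * Y)) (hYY : Y * Y = 0)
    (hXXX : X * X * X = 0) (hXXY : X * X * Y = 0)
    (hmul : ∀ p q, ![X, Y] p * ![X, Y] q = ∑ l, S.m l p q • S.wMatrix ![X, Y] l) :
    S.IsRep (fun i => S.d 0 ^ (δ i).1 * S.d 1 ^ (δ i).2) ![X, Y] where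
  isHomogeneous := Fin.forall_fin_two.2
    ⟨by simpa using hX.isHomogeneous hd, by simpa using hY.isHomogeneous hd⟩
  lt_of_ne_zero := Fin.forall_fin_two.2
    ⟨fun i j hij => (hX i j hij).1, fun i j hij => (hY i j hij).1⟩
  mul_eq := hmul
  mul_mul_eq_zero := by
    have hXYX : X * Y * X = 0 := by rw [mul_assoc, hYX, mul_smul_comm, ← mul_assoc, hXXY, smul_zero]
    have hXYY : X * Y * Y = 0 := by rw [mul_assoc, hYY, mul_zero]
    simp [Fin.forall_fin_two, hXXX, hXXY, hXYX, hXYY, hYX, hYY]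

end Representations

variable {m K : Type} [Fintype m] [Field K]

lemma mulVec_col_of_mul_eq {P M N : Matrix m m K} (h : P * M = N * P) (j : m) :
    P.mulVec (M.col j) = N.mulVec (P.col j) :=
  funext fun i => congrFun₂ h i j

lemma col_eq_mulVec_col [DecidableEq m] {P M N : Matrix m m K} (h : P * M = N * P) {i j : m}
    (hj : M.col j = Pi.single i 1) : P.col i = N.mulVec (P.col j) := by
  rw [← mulVec_col_of_mul_eq h, hj, Matrix.mulVec_single_one]

lemma smul_col_eq_mulVec_col [DecidableEq m] {P M N : Matrix m m K} (h : P * M = N * P) {i j : m}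
    {c : K} (hj : M.col j = Pi.single i c) : c • P.col i = N.mulVec (P.col j) := by
  rw [← mulVec_col_of_mul_eq h, hj, ← Matrix.mulVec_single_one, ← Matrix.mulVec_smul,
    ← Pi.single_smul, smul_eq_mul, mul_one]

section Square

/-- The bidegrees of the four-dimensional family. -/
def squareDegree : Fin 4 → ℕ × ℕ :=
  ![(0, 0), (1, 0), (0, 1), (1, 1)]

/-- The action of the first generator on the four-dimensional family, given by its columns. -/
def squareX : Matrix (Fin 4) (Fin 4) K :=
  (Matrix.of ![0, Pi.single 0 1, 0, Pi.single 2 1]).transpose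

/-- The action of the second generator on the four-dimensional family, given by its columns. -/
def squareY (t : K) : Matrix (Fin 4) (Fin 4) K :=
  (Matrix.of ![0, 0, Pi.single 0 t, Pi.single 1 1]).transpose

lemma isShift_squareX : IsShift squareDegree (1, 0) (squareX : Matrix _ _ K) := fun i j => by
  fin_cases j <;> simp +contextual [squareX, squareDegree, Pi.single_apply]

lemma isShift_squareY (t : K) : IsShift squareDegree (0, 1) (squareY t) := fun i j => by
  fin_cases j <;> simp +contextual [squareY, squareDegree, Pi.single_apply]

lemma squareX_mulVec (f : Fin 4 → K) : squareX.mulVec f = ![f 1, 0, f 3, 0] := by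
  ext i
  fin_cases i <;>
    simp [squareX, Matrix.mulVec_transpose, Matrix.vecMul_eq_sum, Fin.sum_univ_succ]

lemma squareY_mulVec (t : K) (f : Fin 4 → K) : (squareY t).mulVec f = ![t * f 2, f 3, 0, 0] := by
  ext i
  fin_cases i <;>
    simp [squareY, Matrix.mulVec_transpose, Matrix.vecMul_eq_sum, Fin.sum_univ_succ, mul_comm]

lemma squareX_mul_squareX : squareX * squareX = (0 : Matrix _ _ K) :=
  Matrix.mulVec_injective (funext fun f => by simp [← Matrix.mulVec_mulVec, squareX_mulVec])

lemma squareY_mul_squareY (t : K) : squareY t * squareY t = 0 :=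
  Matrix.mulVec_injective (funext fun f => by simp [← Matrix.mulVec_mulVec, squareY_mulVec])

lemma squareY_mul_squareX (t : K) : squareY t * squareX = t • (squareX * squareY t) :=
  Matrix.mulVec_injective (funext fun f => by
    simp [← Matrix.mulVec_mulVec, Matrix.smul_mulVec, squareX_mulVec, squareY_mulVec])

lemma square_rigid {t t' : K} {P : Matrix (Fin 4) (Fin 4) K} (hX : P * squareX = squareX * P)
    (hY : P * squareY t = squareY t' * P) :
    P.IsUpperTriangular ∧ ∃ α, (∀ i, P i i = α) ∧ (α = 0 ∨ t = t') := by
  have h1 : P.col 1 = _ := col_eq_mulVec_col hY (j := 3) rfl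
  have h2 : P.col 2 = _ := col_eq_mulVec_col hX (j := 3) rfl
  have h0 : P.col 0 = _ := col_eq_mulVec_col hX (j := 1) rfl
  have h0' : t • P.col 0 = _ := smul_col_eq_mulVec_col hY (j := 2) rfl
  rw [h1] at h0
  rw [h0, h2] at h0'
  have key : ∀ j i, j ≤ i → P.col j i = if i = j then P.col 3 3 else 0 := by
    simp [Fin.forall_fin_succ, -Matrix.col_apply, h0, h1, h2, squareX_mulVec, squareY_mulVec]
  refine ⟨fun i j (hij : j < i) => (key j i hij.le).trans (if_neg hij.ne'), P.col 3 3,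
    fun i => (key i i le_rfl).trans (if_pos rfl), ?_⟩
  simpa [squareX_mulVec, squareY_mulVec, or_comm] using h0'

end Square

/- On `K²`, realised in the bidegrees `(1, 2)`, `(2, 2)`, `(2, 1)` and `(3, 1)` and identified along
the two generators, the kernels and images of the remaining arrows cut out the lines spanned by
`(1, 0)`, `(0, 1)`, `(1, 1)` and `(t, 1)`, and `t` is their cross-ratio. -/
section FourLines

/-- The bidegrees of the fourteen-dimensional family. -/
def fourLinesDegree : Fin 14 → ℕ × ℕ :=
  ![(0, 2), (3, 0), (2, 1), (2, 1), (1, 2), (1, 2), (0, 3), (4, 0), (3, 1), (3, 1), (2, 2), (2, 2),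
    (1, 3), (4, 1)]

/-- The action of the first generator on the fourteen-dimensional family, given by its columns. -/
def fourLinesX (t : K) : Matrix (Fin 14) (Fin 14) K :=
  (Matrix.of ![0, 0, 0, 0, Pi.single 0 1, Pi.single 0 (-t), 0, Pi.single 1 1, Pi.single 2 1,
    Pi.single 3 1, Pi.single 4 1, Pi.single 5 1, Pi.single 6 1, Pi.single 8 1]).transpose

/-- The action of the second generator on the fourteen-dimensional family, given by its columns. -/
def fourLinesY (c t : K) : Matrix (Fin 14) (Fin 14) K :=
  (Matrix.of ![0, 0, 0, 0, 0, 0, Pi.single 0 (c * (1 - t)), 0, Pi.single 1 c, 0, Pi.single 2 1,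
    Pi.single 3 1, Pi.single 4 1 + Pi.single 5 1, Pi.single 7 1]).transpose

lemma isShift_fourLinesX (t : K) : IsShift fourLinesDegree (1, 0) (fourLinesX t) := fun i j => by
  fin_cases j <;> simp +contextual [fourLinesX, fourLinesDegree, Pi.single_apply]

lemma isShift_fourLinesY (c t : K) : IsShift fourLinesDegree (0, 1) (fourLinesY c t) := by
  intro i j
  by_cases hj : j = 12
  · subst hj
    revert i
    simp [fourLinesY, fourLinesDegree, Fin.forall_fin_succ]
  · fin_cases j <;> first
      | exact absurd rfl hj
      | simp +contextual [fourLinesY, fourLinesDegree, Pi.single_apply]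

lemma fourLinesX_mulVec (t : K) (f : Fin 14 → K) : (fourLinesX t).mulVec f =
    ![f 4 - t * f 5, f 7, f 8, f 9, f 10, f 11, f 12, 0, f 13, 0, 0, 0, 0, 0] := by
  ext i
  revert i
  simp [fourLinesX, Matrix.mulVec_transpose, Matrix.vecMul_eq_sum, Fin.sum_univ_succ,
    Fin.forall_fin_succ, sub_eq_add_neg, mul_comm]

lemma fourLinesY_mulVec (c t : K) (f : Fin 14 → K) : (fourLinesY c t).mulVec f =
    ![c * (1 - t) * f 6, c * f 8, f 10, f 11, f 12, f 12, 0, f 13, 0, 0, 0, 0, 0, 0] := by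
  ext i
  revert i
  simp [fourLinesY, Matrix.mulVec_transpose, Matrix.vecMul_eq_sum, Fin.sum_univ_succ,
    Fin.forall_fin_succ, mul_comm]

lemma fourLinesY_mul_fourLinesY (c t : K) : fourLinesY c t * fourLinesY c t = 0 :=
  Matrix.mulVec_injective (funext fun f => by simp [← Matrix.mulVec_mulVec, fourLinesY_mulVec])

lemma fourLinesY_mul_fourLinesX (c t : K) :
    fourLinesY c t * fourLinesX t = c • (fourLinesX t * fourLinesY c t) :=
  Matrix.mulVec_injective (funext fun f => by
    simp [← Matrix.mulVec_mulVec, Matrix.smul_mulVec, fourLinesX_mulVec, fourLinesY_mulVec,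
      mul_assoc, sub_mul, mul_sub])

lemma fourLinesX_mul_fourLinesX_mul_fourLinesX (t : K) :
    fourLinesX t * fourLinesX t * fourLinesX t = 0 :=
  Matrix.mulVec_injective (funext fun f => by simp [← Matrix.mulVec_mulVec, fourLinesX_mulVec])

lemma fourLinesX_mul_fourLinesX_mul_fourLinesY (c t : K) :
    fourLinesX t * fourLinesX t * fourLinesY c t = 0 :=
  Matrix.mulVec_injective (funext fun f => by
    simp [← Matrix.mulVec_mulVec, fourLinesX_mulVec, fourLinesY_mulVec])

lemma fourLines_relations {c t t' : K} (hc : c ≠ 0) {p r u v s : Fin 14 → K}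
    (hs : (fourLinesY c t').mulVec s = 0)
    (hr : (fourLinesX t').mulVec s = (fourLinesY c t').mulVec r)
    (hv : (fourLinesX t').mulVec ((fourLinesX t').mulVec v) = (fourLinesY c t').mulVec p)
    (hu : (fourLinesX t').mulVec p + (fourLinesX t').mulVec r = (fourLinesY c t').mulVec u)
    (ht : (fourLinesX t').mulVec ((fourLinesX t').mulVec r) =
      -t • (fourLinesX t').mulVec ((fourLinesX t').mulVec p)) :
    (p 11 = 0 ∧ p 12 = 0 ∧ p 13 = 0 ∧ r 12 = 0 ∧ r 13 = 0 ∧ u 13 = 0 ∧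
      s 10 = 0 ∧ s 11 = 0 ∧ s 12 = 0 ∧ s 13 = 0) ∧
    p 10 = v 13 ∧ r 11 = v 13 ∧ s 9 = v 13 ∧ u 12 = v 13 ∧ (v 13 = 0 ∨ t = t') := by
  simp only [fourLinesX_mulVec, fourLinesY_mulVec, Matrix.cons_eq_zero_iff, Matrix.vecCons_inj,
    Matrix.cons_val, Matrix.add_cons, Matrix.head_cons, Matrix.tail_cons, Matrix.smul_cons,
    smul_eq_mul, mul_eq_zero, zero_eq_mul, hc, false_or] at hs hr hv hu ht
  grind

lemma fourLines_rigid {c t t' : K} (hc : c ≠ 0) {P : Matrix (Fin 14) (Fin 14) K}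
    (hX : P * fourLinesX t = fourLinesX t' * P) (hY : P * fourLinesY c t = fourLinesY c t' * P) :
    P.IsUpperTriangular ∧ ∃ α, (∀ i, P i i = α) ∧ (α = 0 ∨ t = t') := by
  have h0 : P.col 0 = _ := col_eq_mulVec_col hX (j := 4) rfl
  have h1 : P.col 1 = _ := col_eq_mulVec_col hX (j := 7) rfl
  have h2 : P.col 2 = _ := col_eq_mulVec_col hX (j := 8) rfl
  have h3 : P.col 3 = _ := col_eq_mulVec_col hX (j := 9) rfl
  have h4 : P.col 4 = _ := col_eq_mulVec_col hX (j := 10) rfl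
  have h5 : P.col 5 = _ := col_eq_mulVec_col hX (j := 11) rfl
  have h6 : P.col 6 = _ := col_eq_mulVec_col hX (j := 12) rfl
  have h7 : P.col 7 = _ := col_eq_mulVec_col hY (j := 13) rfl
  have h8 : P.col 8 = _ := col_eq_mulVec_col hX (j := 13) rfl
  have h2' : P.col 2 = _ := col_eq_mulVec_col hY (j := 10) rfl
  have h3' : P.col 3 = _ := col_eq_mulVec_col hY (j := 11) rfl
  have h5' : (-t) • P.col 0 = _ := smul_col_eq_mulVec_col hX (j := 5) rfl
  have h9 : P.mulVec 0 = _ := mulVec_col_of_mul_eq hY 9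
  have h12 : P.mulVec (Pi.single 4 1 + Pi.single 5 1) = _ := mulVec_col_of_mul_eq hY 12
  rw [h4] at h0
  rw [h7] at h1
  rw [h8] at h2
  obtain ⟨hzero, hp, hr, hs, hu, ht⟩ := fourLines_relations hc
    (p := P.col 10) (r := P.col 11) (u := P.col 12) (v := P.col 13) (s := P.col 9)
    (by rw [← h9, Matrix.mulVec_zero]) (h3.symm.trans h3') (h2.symm.trans h2')
    (by rw [← h12, Matrix.mulVec_add, Matrix.mulVec_single_one, Matrix.mulVec_single_one, h4, h5])
    (by rw [← h0, ← h5, ← h5'])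
  have key : ∀ j i, j ≤ i → P.col j i = if i = j then P.col 13 13 else 0 := by
    simp [Fin.forall_fin_succ, -Matrix.col_apply, h0, h1, h2, h3, h4, h5, h6, h7, h8,
      fourLinesX_mulVec, fourLinesY_mulVec, hzero, hp, hr, hs, hu]
  exact ⟨fun i j (hij : j < i) => (key j i hij.le).trans (if_neg hij.ne'), P.col 13 13,
    fun i => (key i i le_rfl).trans (if_pos rfl), ht⟩

end FourLines

end Families

section SkewPrimitives

variable {K H : Type} [Field K] [Ring H]

lemma comul_mul_of_mem_skewPrim [Bialgebra K H] {a b x y : H} (hx : x ∈ skewPrim K H 1 a)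
    (hy : y ∈ skewPrim K H 1 b) :
    Coalgebra.comul (R := K) (x * y) =
      1 ⊗ₜ[K] (x * y) + x ⊗ₜ[K] (a * y) + y ⊗ₜ[K] (x * b) + (x * y) ⊗ₜ[K] (a * b) := by
  rw [Bialgebra.comul_mul, (mem_skewPrim K H).1 hx, (mem_skewPrim K H).1 hy]
  simp only [mul_add, add_mul, Algebra.TensorProduct.tmul_mul_tmul, mul_one, one_mul]
  abel

lemma comul_mul_sub_smul [Bialgebra K H] {a b x y : H} {s σ : K} (hx : x ∈ skewPrim K H 1 a)
    (hy : y ∈ skewPrim K H 1 b) (hab : Commute a b)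
    (hxb : x * b = s • (b * x) + σ • (b - b * a)) :
    Coalgebra.comul (R := K) (x * y - σ • y) =
      1 ⊗ₜ[K] (x * y - σ • y) + (x ⊗ₜ[K] (a * y) + s • (y ⊗ₜ[K] (b * x))) +
        (x * y - σ • y) ⊗ₜ[K] (a * b) := by
  rw [map_sub, map_smul, comul_mul_of_mem_skewPrim hx hy, (mem_skewPrim K H).1 hy, hxb, hab.eq]
  simp only [tmul_add, tmul_sub, sub_tmul, tmul_smul, ← smul_tmul', smul_add, smul_sub]
  abel

lemma sq_mem_skewPrim [Bialgebra K H] {a x : H} (hx : x ∈ skewPrim K H 1 a)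
    (hxa : x * a = -(a * x)) : x ^ 2 ∈ skewPrim K H 1 (a ^ 2) := by
  rw [mem_skewPrim, sq, sq, comul_mul_of_mem_skewPrim hx hx, hxa, tmul_neg, add_neg_cancel_right]

lemma mul_sub_smul_mul_mem_skewPrim [Bialgebra K H] {a b x y : H} {s r : K}
    (hx : x ∈ skewPrim K H 1 a) (hy : y ∈ skewPrim K H 1 b) (hab : Commute a b)
    (hxb : x * b = s • (b * x)) (hya : y * a = r • (a * y)) (hsr : s * r = 1) :
    x * y - s • (y * x) ∈ skewPrim K H 1 (a * b) := by
  rw [mem_skewPrim, map_sub, map_smul, comul_mul_of_mem_skewPrim hx hy,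
    comul_mul_of_mem_skewPrim hy hx, hxb, hya, ← hab.eq]
  simp only [tmul_sub, sub_tmul, tmul_smul, ← smul_tmul', smul_add, smul_smul, hsr, one_smul]
  abel

variable [HopfAlgebra K H]

/-- A skew primitive `x ∈ P(1, a)` which is not a multiple of the trivial one `1 - a`. -/
structure IsNontrivialSkewPrimitive (a : GroupLike K H) (x : H) : Prop where
  mem : x ∈ skewPrim K H 1 (a : H)
  notMem : x ∉ Submodule.span K {1 - (a : H)}

lemma one_sub_mem_skewPrim (a : GroupLike K H) : 1 - (a : H) ∈ skewPrim K H 1 (a : H) := by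
  simp [mem_skewPrim, Algebra.TensorProduct.one_def, tmul_sub, sub_tmul]

lemma exists_isNontrivialSkewPrimitive {a : GroupLike K H} (ha : ntRank K H 1 (a : H) = 1) :
    ∃ x, IsNontrivialSkewPrimitive a x := by
  obtain ⟨u, hu, -⟩ := rank_eq_one_iff.1 ha
  obtain ⟨⟨x, hx⟩, rfl⟩ := Submodule.mkQ_surjective _ u
  exact ⟨x, hx, fun h => hu ((Submodule.Quotient.mk_eq_zero _).2 h)⟩

namespace IsNontrivialSkewPrimitive

variable {a : GroupLike K H} {x : H} (hx : IsNontrivialSkewPrimitive a x)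
include hx

lemma exists_eq_smul_add_smul (ha : ntRank K H 1 (a : H) = 1) {z : H}
    (hz : z ∈ skewPrim K H 1 (a : H)) : ∃ p q : K, z = p • x + q • (1 - (a : H)) := by
  let N := (Submodule.span K {1 - (a : H)}).comap (skewPrim K H 1 (a : H)).subtype
  have hxN : N.mkQ ⟨x, hx.mem⟩ ≠ 0 := fun h =>
    hx.notMem ((Submodule.Quotient.mk_eq_zero N).1 h)
  obtain ⟨p, hp⟩ := (finrank_eq_one_iff_of_nonzero' _ hxN).1
    (Module.rank_eq_one_iff_finrank_eq_one.1 ha) (N.mkQ ⟨z, hz⟩)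
  rw [← map_smul, eq_comm, ← sub_eq_zero, ← map_sub] at hp
  obtain ⟨q, hq⟩ := Submodule.mem_span_singleton.1 ((Submodule.Quotient.mk_eq_zero N).1 hp)
  exact ⟨p, q, sub_eq_iff_eq_add'.1 hq.symm⟩

lemma add_smul_one_sub (k : K) : IsNontrivialSkewPrimitive a (x + k • (1 - (a : H))) where
  mem := add_mem hx.mem (Submodule.smul_mem _ _ (one_sub_mem_skewPrim a))
  notMem h := hx.notMem <| (Submodule.add_mem_iff_left _ (Submodule.smul_mem _ k
    (Submodule.mem_span_singleton_self _))).1 h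

lemma exists_mul_groupLike_eq (ha : ntRank K H 1 (a : H) = 1) {g : GroupLike K H}
    (hga : Commute g a) :
    ∃ p q : K, x * (g : H) = p • ((g : H) * x) + q • ((g : H) - g * a) := by
  have hconj : (g⁻¹ : GroupLike K H) * x * g ∈ skewPrim K H 1 (a : H) := by
    have hga' : ((g⁻¹ : GroupLike K H) : H) * a * g = a := by
      rw [← GroupLike.val_mul, ← GroupLike.val_mul, mul_assoc, ← hga.eq, inv_mul_cancel_left]
    rw [mem_skewPrim, Bialgebra.comul_mul, Bialgebra.comul_mul, (mem_skewPrim K H).1 hx.mem]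
    simpa [mul_add, add_mul] using congrArg (((g⁻¹ : GroupLike K H) * x * g : H) ⊗ₜ[K] ·) hga'
  obtain ⟨p, q, hpq⟩ := hx.exists_eq_smul_add_smul ha hconj
  refine ⟨p, q, ?_⟩
  have hmul := congrArg ((g : H) * ·) hpq
  simpa [← mul_assoc, mul_add, mul_sub] using hmul

end IsNontrivialSkewPrimitive

end SkewPrimitives

section CommutationCoefficients

variable {K H : Type} [Field K] [Ring H] [HopfAlgebra K H] {a b : GroupLike K H} {x y : H}
  {s σ r τ q n : K}

/-- The quadratic system whose `w`'s are `x * y` and `y * x`, up to skew primitives. -/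
noncomputable def squareSystem (hx : IsNontrivialSkewPrimitive a x)
    (hy : IsNontrivialSkewPrimitive b y) (hne : a ≠ b) (hab : Commute a b)
    (hxb : x * (b : H) = s • ((b : H) * x) + σ • ((b : H) - b * a))
    (hya : y * (a : H) = r • ((a : H) * y) + τ • ((a : H) - a * b)) (hsr : 1 - s * r ≠ 0) :
    QuadraticSystem K H (Fin 2) (Fin 2) where
  d := ![a, b]
  z := ![x, y]
  e := ![a * b, a * b]
  w := ![x * y - σ • y, y * x - τ • x]
  m := ![!![0, 1; s, 0], !![0, r; 1, 0]]
  n := ![(1 - s * r)⁻¹ • !![0, 1; -r, 0], (1 - s * r)⁻¹ • !![0, -s; 1, 0]]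
  d_injective := by simp [Function.Injective, Fin.forall_fin_two, hne, hne.symm]
  comul_z := Fin.forall_fin_two.2
    ⟨(mem_skewPrim K H).1 hx.mem, (mem_skewPrim K H).1 hy.mem⟩
  z_notMem := Fin.forall_fin_two.2 ⟨hx.notMem, hy.notMem⟩
  comul_w := by
    have hab' : Commute (a : H) b := hab.map (GroupLike.valMonoidHom K H)
    refine Fin.forall_fin_two.2 ⟨?_, ?_⟩
    · simpa using comul_mul_sub_smul hx.mem hy.mem hab' hxb
    · have h := comul_mul_sub_smul hy.mem hx.mem hab'.symm hya
      rw [add_comm (y ⊗ₜ[K] _), ← hab'.eq] at h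
      simpa using h
  dual := by
    have := inv_mul_cancel₀ hsr
    simp only [Matrix.smul_of, Matrix.smul_cons, Matrix.smul_empty, smul_eq_mul, Fin.sum_univ_two,
      Fin.forall_fin_two, Matrix.of_apply, Matrix.cons_val, ↓reduceIte, zero_ne_one, one_ne_zero]
    grind
  homogeneous := by simp [Fin.forall_fin_two, hab.eq]

/-- The quadratic system whose `w`'s are `x * x` and `x * y`, up to skew primitives. -/
noncomputable def fourLinesSystem (hx : IsNontrivialSkewPrimitive a x)
    (hy : IsNontrivialSkewPrimitive b y) (hne : a ≠ b) (hab : Commute a b)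
    (hxa : x * (a : H) = q • ((a : H) * x) + n • ((a : H) - a * a))
    (hxb : x * (b : H) = s • ((b : H) * x) + σ • ((b : H) - b * a)) (hq : 1 + q ≠ 0) :
    QuadraticSystem K H (Fin 2) (Fin 2) where
  d := ![a, b]
  z := ![x, y]
  e := ![a * a, a * b]
  w := ![x * x - n • x, x * y - σ • y]
  m := ![!![1 + q, 0; 0, 0], !![0, 1; s, 0]]
  n := ![!![(1 + q)⁻¹, 0; 0, 0], !![0, 1; 0, 0]]
  d_injective := by simp [Function.Injective, Fin.forall_fin_two, hne, hne.symm]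
  comul_z := Fin.forall_fin_two.2
    ⟨(mem_skewPrim K H).1 hx.mem, (mem_skewPrim K H).1 hy.mem⟩
  z_notMem := Fin.forall_fin_two.2 ⟨hx.notMem, hy.notMem⟩
  comul_w := by
    have hab' : Commute (a : H) b := hab.map (GroupLike.valMonoidHom K H)
    refine Fin.forall_fin_two.2 ⟨?_, ?_⟩
    · simpa [add_smul] using comul_mul_sub_smul hx.mem hx.mem (.refl _) hxa
    · simpa using comul_mul_sub_smul hx.mem hy.mem hab' hxb
  dual := by simp [Fin.forall_fin_two, hq]
  homogeneous := by simp [Fin.forall_fin_two]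

lemma mul_eq_one_of_discreteCorepType [Infinite K] (hdiscrete : DiscreteCorepType K H)
    (hx : IsNontrivialSkewPrimitive a x) (hy : IsNontrivialSkewPrimitive b y) (hne : a ≠ b)
    (hab : Commute a b) (hxb : x * (b : H) = s • ((b : H) * x) + σ • ((b : H) - b * a))
    (hya : y * (a : H) = r • ((a : H) * y) + τ • ((a : H) - a * b)) : s * r = 1 := by
  by_contra hsr
  have hsr' : 1 - s * r ≠ 0 := sub_ne_zero.2 (Ne.symm hsr)
  let S := squareSystem hx hy hne hab hxb hya hsr'
  refine S.not_discreteCorepType_of_isRep (X := fun t : K => ![squareX, squareY t])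
    (fun t => S.isRep_pair hab isShift_squareX (isShift_squareY t) (squareY_mul_squareX t)
      (squareY_mul_squareY t) ?_ ?_ ?_) (fun t t' P hP => square_rigid (hP 0) (hP 1)) hdiscrete
  · rw [squareX_mul_squareX, zero_mul]
  · rw [squareX_mul_squareX, zero_mul]
  · simp only [Fin.forall_fin_two, S, squareSystem, QuadraticSystem.wMatrix, Fintype.sum_prod_type,
      Fin.sum_univ_two, Matrix.smul_of, Matrix.smul_cons, Matrix.smul_empty, smul_eq_mul,
      Matrix.of_apply, Matrix.cons_val, squareX_mul_squareX, squareY_mul_squareY]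
    refine ⟨⟨?_, ?_⟩, ?_, ?_⟩ <;> match_scalars <;> field_simp <;> ring

lemma eq_neg_one_of_discreteCorepType [Infinite K] (hdiscrete : DiscreteCorepType K H)
    (hx : IsNontrivialSkewPrimitive a x) (hy : IsNontrivialSkewPrimitive b y) (hne : a ≠ b)
    (hab : Commute a b) (hxa : x * (a : H) = q • ((a : H) * x) + n • ((a : H) - a * a))
    (hxb : x * (b : H) = s • ((b : H) * x) + σ • ((b : H) - b * a)) (hs : s ≠ 0) : q = -1 := by
  by_contra hq
  have hq' : 1 + q ≠ 0 := fun h => hq (eq_neg_of_add_eq_zero_right h)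
  let S := fourLinesSystem hx hy hne hab hxa hxb hq'
  refine S.not_discreteCorepType_of_isRep (X := fun t : K => ![fourLinesX t, fourLinesY s t])
    (fun t => S.isRep_pair hab (isShift_fourLinesX t) (isShift_fourLinesY s t)
      (fourLinesY_mul_fourLinesX s t) (fourLinesY_mul_fourLinesY s t)
      (fourLinesX_mul_fourLinesX_mul_fourLinesX t) (fourLinesX_mul_fourLinesX_mul_fourLinesY s t)
      ?_) (fun t t' P hP => fourLines_rigid hs (hP 0) (hP 1)) hdiscrete
  simp [Fin.forall_fin_two, S, fourLinesSystem, QuadraticSystem.wMatrix, Fintype.sum_prod_type,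
    fourLinesY_mul_fourLinesX, fourLinesY_mul_fourLinesY, hq']

end CommutationCoefficients

section Normalisation

lemma add_smul_one_sub_mul {R A : Type*} [CommRing R] [Ring A] [Algebra R A] {g a x : A} {p q : R}
    (hga : Commute g a) (hxg : x * g = p • (g * x) + q • (g - g * a)) (k : R) :
    (x + k • (1 - a)) * g =
      p • (g * (x + k • (1 - a))) + (q + k - p * k) • (g - g * a) := by
  rw [add_mul, hxg, smul_mul_assoc, sub_mul, one_mul, ← hga.eq, mul_add, mul_smul_comm, mul_sub,
    mul_one]
  module

variable {K H : Type} [Field K] [Ring H] [HopfAlgebra K H] {a b : GroupLike K H} {x : H}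

lemma eq_zero_of_mul_eq_neg_mul (hchar : (2 : K) ≠ 0) (ha : a ≠ 1) (hab : Commute a b)
    (hxa : x * (a : H) = -((a : H) * x)) {s σ : K}
    (hxb : x * (b : H) = s • ((b : H) * x) + σ • ((b : H) - b * a)) : σ = 0 := by
  have hab' : (a : H) * b = b * a := hab.map (GroupLike.valMonoidHom K H)
  have hxab : x * ((a : H) * b) = -(s • ((b * a : H) * x)) - σ • ((b * a : H) - b * a * a) := by
    rw [← mul_assoc, hxa, neg_mul, mul_assoc, hxb, mul_add, mul_smul_comm, mul_smul_comm, mul_sub,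
      ← mul_assoc, ← mul_assoc, hab', neg_add']
  have hxba : x * ((b : H) * a) = -(s • ((b * a : H) * x)) + σ • ((b * a : H) - b * a * a) := by
    rw [← mul_assoc, hxb, add_mul, smul_mul_assoc, smul_mul_assoc, sub_mul, mul_assoc (b : H) x,
      hxa, mul_neg, smul_neg, mul_assoc (b : H) a x]
  have hzero : (2 * σ) • ((b * a : H) - b * a * a) = 0 := by
    rw [hab', hxba, sub_eq_add_neg (-_), add_right_inj, eq_neg_iff_add_eq_zero] at hxab
    rw [two_mul, add_smul, hxab]
  refine (mul_eq_zero.1 ((smul_eq_zero.1 hzero).resolve_right fun h => ha ?_)).resolve_left hchar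
  rw [sub_eq_zero, ← GroupLike.val_mul, ← GroupLike.val_mul, GroupLike.val_inj] at h
  exact mul_eq_left.1 h.symm

lemma IsNontrivialSkewPrimitive.exists_mul_eq_neg_and_mul_eq_smul
    (hx : IsNontrivialSkewPrimitive a x) (hchar : (2 : K) ≠ 0) (hab : Commute a b) {n s σ : K}
    (hxa : x * (a : H) = (-1 : K) • ((a : H) * x) + n • ((a : H) - a * a))
    (hxb : x * (b : H) = s • ((b : H) * x) + σ • ((b : H) - b * a)) :
    ∃ x', IsNontrivialSkewPrimitive a x' ∧ x' * (a : H) = -((a : H) * x') ∧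
      x' * (b : H) = s • ((b : H) * x') := by
  have hab' : Commute (a : H) b := hab.map (GroupLike.valMonoidHom K H)
  have ha : a ≠ 1 := by
    rintro rfl
    have h2x : (2 : K) • x = 0 := by
      rw [two_smul, ← eq_neg_iff_add_eq_zero]
      simpa using hxa
    exact hx.notMem ((smul_eq_zero.1 h2x).resolve_left hchar ▸ zero_mem _)
  have hx'a := add_smul_one_sub_mul (.refl (a : H)) hxa (-n / 2)
  have hx'b := add_smul_one_sub_mul hab'.symm hxb (-n / 2)
  have hn : n + -n / 2 - -1 * (-n / 2) = 0 := by field_simp; ring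
  rw [hn, zero_smul, add_zero, neg_one_smul] at hx'a
  rw [eq_zero_of_mul_eq_neg_mul hchar ha hab hx'a hx'b, zero_smul, add_zero] at hx'b
  exact ⟨_, hx.add_smul_one_sub _, hx'a, hx'b⟩

end Normalisation

section LinkComponent

variable {K H : Type}

lemma IsSubcoalgebra.sup_span_skewPrim [CommRing K] [AddCommGroup H] [Module K H] [Coalgebra K H]
    {C : Submodule K H} (hC : IsSubcoalgebra K H C) {g h x : H} (hg : g ∈ C) (hh : h ∈ C)
    (hx : x ∈ skewPrim K H g h) : IsSubcoalgebra K H (C ⊔ Submodule.span K {x}) := by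
  let D := C ⊔ Submodule.span K {x}
  have hCD : C ≤ D := le_sup_left
  have hxD : x ∈ D := Submodule.mem_sup_right (Submodule.mem_span_singleton_self x)
  have htmul : ∀ {u v : H}, u ∈ D → v ∈ D →
      u ⊗ₜ[K] v ∈ LinearMap.range (TensorProduct.map D.subtype D.subtype) :=
    fun hu hv => ⟨⟨_, hu⟩ ⊗ₜ ⟨_, hv⟩, rfl⟩
  suffices D ≤ (LinearMap.range (TensorProduct.map D.subtype D.subtype)).comap
      Coalgebra.comul from this
  refine sup_le (fun c hc => ?_) ((Submodule.span_singleton_le_iff_mem _ _).2 ?_)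
  · exact range_map_mono (by simpa) (by simpa) (hC c hc)
  · rw [Submodule.mem_comap, (mem_skewPrim K H).1 hx]
    exact add_mem (htmul (hCD hg) hxD) (htmul hxD (hCD hh))

variable [Field K]

lemma IsSubcoalgebra.mem_of_mem_sup_span_skewPrim [AddCommGroup H] [Module K H] [Coalgebra K H]
    {C : Submodule K H} (hC : IsSubcoalgebra K H C) {g h x : H} (hg : g ∈ C) (hh : h ∈ C)
    (hx : x ∈ skewPrim K H g h) {u : H} (hu : IsGrouplike K H u)
    (huD : u ∈ C ⊔ Submodule.span K {x}) : u ∈ C := by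
  by_contra huC
  obtain ⟨f, hfu, hfC⟩ := Submodule.exists_le_ker_of_notMem huC
  have hker : C ⊔ Submodule.span K {x} ≤
      LinearMap.ker (TensorProduct.map f f ∘ₗ Coalgebra.comul) := by
    refine sup_le (fun c hc => ?_) ((Submodule.span_singleton_le_iff_mem _ _).2 ?_)
    · obtain ⟨t, ht⟩ := hC c hc
      have hf0 : f ∘ₗ C.subtype = 0 := LinearMap.ext fun c => hfC c.2
      rw [LinearMap.mem_ker, LinearMap.comp_apply, ← ht, ← LinearMap.comp_apply,
        ← TensorProduct.map_comp, hf0, TensorProduct.map_zero_left, LinearMap.zero_apply]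
    · rw [LinearMap.mem_ker, LinearMap.comp_apply, (mem_skewPrim K H).1 hx, map_add, map_tmul,
        map_tmul, hfC hg, hfC hh, zero_tmul, tmul_zero, add_zero]
  have huu := congrArg (LinearMap.mul' K K) (hker huD)
  rw [LinearMap.comp_apply, hu.2, map_tmul, LinearMap.mul'_apply, map_zero] at huu
  exact hfu (mul_self_eq_zero.1 huu)

variable [Ring H]

lemma IsLIC1.skewPrim_le [Bialgebra K H] {B : Submodule K H} (hB : IsLIC1 K H B) {g h : H}
    (hg : g ∈ B) (hh : h ∈ B) : skewPrim K H g h ≤ B := by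
  intro x hx
  have hle : B ≤ B ⊔ Submodule.span K {x} := le_sup_left
  have hconn : ConnectedOn K H (B ⊔ Submodule.span K {x}) := fun u v hu huD hv hvD =>
    have huB := hB.subcoalg.mem_of_mem_sup_span_skewPrim hg hh hx hu huD
    have hvB := hB.subcoalg.mem_of_mem_sup_span_skewPrim hg hh hx hv hvD
    .mono (fun _ _ ⟨z, hz, hlink⟩ => ⟨z, hle hz, hlink⟩) _ _ (hB.connected u v hu huB hv hvB)
  rw [← hB.maximal _ (hB.subcoalg.sup_span_skewPrim hg hh hx) hconn hle]
  exact Submodule.mem_sup_right (Submodule.mem_span_singleton_self x)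

lemma ntRank_eq_of_arrowsEq [Bialgebra K H] {B : Submodule K H} {g h : H} {c : ℕ}
    (hle : skewPrim K H g h ≤ B) (hgh : g - h ∈ skewPrim K H g h)
    (harrows : arrowsEq K H B g h c) : ntRank K H g h = c := by
  have hrank : ntRank K H g h + Module.rank K (Submodule.span K {g - h}) =
      Module.rank K (skewPrim K H g h) := by
    rw [← (Submodule.comapSubtypeEquivOfLe
      ((Submodule.span_singleton_le_iff_mem _ _).2 hgh)).rank_eq]
    exact Submodule.rank_quotient_add_rank _
  rw [arrowsEq, inf_eq_left.2 hle, ← hrank] at harrows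
  split_ifs at harrows with heq
  · rwa [sub_eq_zero.2 heq, Submodule.span_zero_singleton, rank_bot, add_zero] at harrows
  · have hone : Module.rank K (Submodule.span K {g - h}) = 1 :=
      Module.rank_eq_one_iff_finrank_eq_one.2 (finrank_span_singleton (sub_ne_zero.2 heq))
    rwa [hone, Cardinal.add_one_inj] at harrows

end LinkComponent

theorem choice_of_skew_primitives_general
    (K : Type) [Field K] [Infinite K] (hchar : (2 : K) ≠ 0)
    (H : Type) [Ring H] [HopfAlgebra K H] (hdiscrete : DiscreteCorepType K H)
    (a b : GroupLike K H) (hne : a ≠ b) (hab : Commute a b)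
    (ha : ntRank K H 1 (a : H) = 1) (hb : ntRank K H 1 (b : H) = 1) :
    ∃ (x y : H) (lam : K), lam ≠ 0 ∧
      x ∈ skewPrim K H 1 (a : H) ∧ x ∉ Submodule.span K {(1 : H) - a} ∧
      y ∈ skewPrim K H 1 (b : H) ∧ y ∉ Submodule.span K {(1 : H) - b} ∧
      a * x + x * a = 0 ∧ b * y + y * b = 0 ∧
      b * x + lam⁻¹ • (x * b) = 0 ∧ a * y + lam • (y * a) = 0 ∧
      x ^ 2 ∈ skewPrim K H 1 ((a : H) ^ 2) ∧ y ^ 2 ∈ skewPrim K H 1 ((b : H) ^ 2) ∧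
      x * y + lam • (y * x) ∈ skewPrim K H 1 ((a : H) * b) := by
  obtain ⟨x₀, hx₀⟩ := exists_isNontrivialSkewPrimitive ha
  obtain ⟨y₀, hy₀⟩ := exists_isNontrivialSkewPrimitive hb
  obtain ⟨q, n, hxa₀⟩ := hx₀.exists_mul_groupLike_eq ha (.refl a)
  obtain ⟨s, σ, hxb₀⟩ := hx₀.exists_mul_groupLike_eq ha hab.symm
  obtain ⟨r, τ, hya₀⟩ := hy₀.exists_mul_groupLike_eq hb hab
  obtain ⟨q', n', hyb₀⟩ := hy₀.exists_mul_groupLike_eq hb (.refl b)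
  have hsr : s * r = 1 := mul_eq_one_of_discreteCorepType hdiscrete hx₀ hy₀ hne hab hxb₀ hya₀
  have hs : s ≠ 0 := left_ne_zero_of_mul_eq_one hsr
  have hr : r ≠ 0 := right_ne_zero_of_mul_eq_one hsr
  obtain rfl := eq_neg_one_of_discreteCorepType hdiscrete hx₀ hy₀ hne hab hxa₀ hxb₀ hs
  obtain rfl := eq_neg_one_of_discreteCorepType hdiscrete hy₀ hx₀ hne.symm hab.symm hyb₀ hya₀ hr
  obtain ⟨x, hx, hxa, hxb⟩ := hx₀.exists_mul_eq_neg_and_mul_eq_smul hchar hab hxa₀ hxb₀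
  obtain ⟨y, hy, hyb, hya⟩ := hy₀.exists_mul_eq_neg_and_mul_eq_smul hchar hab.symm hyb₀ hya₀
  have hxy := mul_sub_smul_mul_mem_skewPrim hx.mem hy.mem
    (hab.map (GroupLike.valMonoidHom K H)) hxb hya hsr
  refine ⟨x, y, -s, neg_ne_zero.2 hs, hx.mem, hx.notMem, hy.mem, hy.notMem, ?_, ?_, ?_, ?_,
    sq_mem_skewPrim hx.mem hxa, sq_mem_skewPrim hy.mem hyb, ?_⟩
  · rw [hxa, add_neg_cancel]
  · rw [hyb, add_neg_cancel]
  · rw [hxb, inv_neg, neg_smul, inv_smul_smul₀ hs, add_neg_cancel]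
  · rw [hya, neg_smul, smul_smul, hsr, one_smul, add_neg_cancel]
  · rwa [neg_smul, ← sub_eq_add_neg]

theorem choice_of_skew_primitives
    (K : Type) [Field K] [IsAlgClosed K] (hchar : (2 : K) ≠ 0)
    (H : Type) [Ring H] [HopfAlgebra K H]
    (hpointed : IsPointedCoalgebra K H) (hdiscrete : DiscreteCorepType K H)
    (B : Submodule K H) (hB : IsLIC1 K H B)
    (a b : H) (hab : a ≠ b) (m n : ℤ) (hgrid : GridQuiverOn K H B a b m n)
    (hPa : 1 < Module.rank K ↥(skewPrim K H 1 a))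
    (hPb : 1 < Module.rank K ↥(skewPrim K H 1 b)) :
    ∃ (x y : H) (lam : K), lam ≠ 0 ∧
      x ∈ skewPrim K H 1 a ∧ x ∉ Submodule.span K {(1 : H) - a} ∧
      y ∈ skewPrim K H 1 b ∧ y ∉ Submodule.span K {(1 : H) - b} ∧
      a * x + x * a = 0 ∧ b * y + y * b = 0 ∧
      b * x + lam⁻¹ • (x * b) = 0 ∧ a * y + lam • (y * a) = 0 ∧
      x ^ 2 ∈ skewPrim K H 1 (a ^ 2) ∧ y ^ 2 ∈ skewPrim K H 1 (b ^ 2) ∧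
      x * y + lam • (y * x) ∈ skewPrim K H 1 (a * b) := by
  obtain ⟨⟨ha, haB⟩, ⟨hb, hbB⟩, hcomm, -, -, -, -, -, -, harrows⟩ := hgrid
  obtain ⟨a, rfl⟩ : ∃ g : GroupLike K H, (g : H) = a := ⟨⟨a, ha.1, ha.2⟩, rfl⟩
  obtain ⟨b, rfl⟩ : ∃ g : GroupLike K H, (g : H) = b := ⟨⟨b, hb.1, hb.2⟩, rfl⟩
  have := IsAlgClosed.instInfinite (K := K)
  have hone : grouplikeIn K H B 1 := ⟨⟨Bialgebra.counit_one, Bialgebra.comul_one⟩, hB.one_mem⟩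
  have hna : ntRank K H 1 (a : H) = 1 := by
    simpa using ntRank_eq_of_arrowsEq (hB.skewPrim_le hB.one_mem haB) (one_sub_mem_skewPrim a)
      (harrows 1 a hone ⟨ha, haB⟩)
  have hnb : ntRank K H 1 (b : H) = 1 := by
    simpa using ntRank_eq_of_arrowsEq (hB.skewPrim_le hB.one_mem hbB) (one_sub_mem_skewPrim b)
      (harrows 1 b hone ⟨hb, hbB⟩)
  exact choice_of_skew_primitives_general K hchar H hdiscrete a b (by rintro rfl; exact hab rfl)
    (GroupLike.val_injective hcomm) hna hnb
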